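/- arXiv:1607.04768 — 3 statements merged into one kernel-verified Lean document; each statement's English description precedes it below -/
import Mathlib

section
/- Let G be a finite cubic graph (every vertex has degree exactly 3). Suppose the vertex set of G can be partitioned into the vertex set of a subtree T of G and the vertex sets of finitely many cycles of G, such that there is no edge of G joining a vertex of one cycle of the partition to a vertex of a cycle of the partition (including no chords within a cycle and no edges between two distinct cycles), and such that every pendant vertex of T (vertex of degree one in T) is adjacent in G to at least one vertex lying on a cycle of the partition. Then the edge set of G can be decomposed into a spanning tree of G, a matching, and a family of vertex-disjoint cycles. -/
/-- Lemma 1: let `G` be a finite cubic graph whose vertex set is partitioned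
into the vertex set of a subtree `T` of `G` and the vertex sets of finitely
many cycles, such that there is no edge of `G` joining vertices of cycles
other than the cycle edges themselves (no chords, no edges between distinct
cycles), and every pendant vertex of `T` is adjacent in `G` to a vertex of
some cycle.  Then `E(G)` decomposes into a spanning tree, a matching and a
family of vertex-disjoint cycles. -/
theorem cubic_partition_tree_cycles_decomposition
    {V : Type*} [Fintype V] [DecidableEq V] (G : SimpleGraph V) [DecidableRel G.Adj]
    (hcubic : ∀ v : V, G.degree v = 3)
    -- `T` is a subtree of `G`
    (T : G.Subgraph) (hT : T.coe.IsTree)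
    -- a finite family of cycles of `G`
    {ι : Type} [Fintype ι] (x : ι → V) (w : ∀ i : ι, G.Walk (x i) (x i))
    (hcyc : ∀ i, (w i).IsCycle)
    -- the vertex sets of `T` and of the cycles partition `V(G)`
    (hcover : ∀ v : V, v ∈ T.verts ∨ ∃ i, v ∈ (w i).support)
    (hTdisj : ∀ i, ∀ v ∈ (w i).support, v ∉ T.verts)
    (hcycdisj : Pairwise fun i j => ∀ v : V, v ∈ (w i).support → v ∉ (w j).support)
    -- no edge of `G` between vertices of cycles except the cycle edges
    -- (so no chords within a cycle and no edges between two cycles)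
    (hnoedge : ∀ i j : ι, ∀ a b : V, a ∈ (w i).support → b ∈ (w j).support →
      G.Adj a b → i = j ∧ s(a, b) ∈ (w i).edges)
    -- every pendant vertex of `T` is adjacent in `G` to a vertex of a cycle
    (hpendant : ∀ v ∈ T.verts, (∃! u : V, T.Adj v u) →
      ∃ i, ∃ a ∈ (w i).support, G.Adj v a) :
    ∃ (Ts M C : Set (Sym2 V)),
      -- the three parts partition the edge set of `G`
      Ts ∪ M ∪ C = G.edgeSet ∧
      Disjoint Ts M ∧ Disjoint Ts C ∧ Disjoint M C ∧
      -- `Ts` is the edge set of a spanning tree of `G`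
      (SimpleGraph.fromEdgeSet Ts).IsTree ∧
      -- `M` is a matching: distinct edges of `M` share no vertex
      M.Pairwise (fun e f => ∀ v : V, v ∈ e → v ∉ f) ∧
      -- `C` is the edge set of a family of vertex-disjoint cycles of `G`
      (∃ (κ : Type) (_ : Fintype κ) (y : κ → V)
          (c : ∀ k : κ, G.Walk (y k) (y k)),
        (∀ k, (c k).IsCycle) ∧
        (Pairwise fun k l => ∀ v : V, v ∈ (c k).support → v ∉ (c l).support) ∧
        C = ⋃ k, {e : Sym2 V | e ∈ (c k).edges}) := by
  classical
  -- unique neighbour in `T` of a vertex outside `T`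
  have huniq : ∀ b, b ∉ T.verts → ∃! a, a ∈ T.verts ∧ G.Adj a b := by
    intro b hb
    obtain ⟨i, hi⟩ := (hcover b).resolve_left hb
    have h2 := (hcyc i).ncard_neighborSet_toSubgraph_eq_two hi
    have h3 : (G.neighborSet b).ncard = 3 := by
      rw [← hcubic b, ← G.card_neighborSet_eq_degree, Set.ncard_eq_toFinset_card', Set.toFinset_card]
    have hsub : (w i).toSubgraph.neighborSet b ⊆ G.neighborSet b :=
      fun a ha => (w i).toSubgraph.adj_sub ha
    have h1 : (G.neighborSet b \ (w i).toSubgraph.neighborSet b).ncard = 1 := by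
      rw [Set.ncard_diff hsub, h2, h3]
    obtain ⟨a, ha⟩ := Set.ncard_eq_one.1 h1
    have key : ∀ c, (c ∈ T.verts ∧ G.Adj c b) ↔ c = a := by
      intro c
      rw [← Set.mem_singleton_iff, ← ha]
      simp only [Set.mem_diff, SimpleGraph.mem_neighborSet, SimpleGraph.Subgraph.mem_neighborSet,
        SimpleGraph.Walk.adj_toSubgraph_iff_mem_edges]
      constructor
      · rintro ⟨hc, hcb⟩
        exact ⟨hcb.symm, fun h => hTdisj i c ((w i).snd_mem_support_of_mem_edges h) hc⟩
      · rintro ⟨h, hn⟩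
        refine ⟨?_, h.symm⟩
        by_contra hc
        obtain ⟨j, hj⟩ := (hcover c).resolve_left hc
        exact hn (hnoedge i j b c hi hj h).2
    exact ⟨a, (key a).2 rfl, fun c hc => (key c).1 hc⟩
  set Ts : Set (Sym2 V) := T.edgeSet ∪ {e | ∃ a b, a ∈ T.verts ∧ b ∉ T.verts ∧ G.Adj a b ∧ e = s(a, b)}
    with hTs
  set M : Set (Sym2 V) := {e | ∃ a b, a ∈ T.verts ∧ b ∈ T.verts ∧ G.Adj a b ∧ ¬ T.Adj a b ∧ e = s(a, b)}
    with hM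
  set C : Set (Sym2 V) := ⋃ k, {e : Sym2 V | e ∈ (w k).edges} with hC
  have memTs : ∀ a b, s(a, b) ∈ Ts ↔ T.Adj a b ∨ (a ∈ T.verts ∧ b ∉ T.verts ∧ G.Adj a b) ∨
      (b ∈ T.verts ∧ a ∉ T.verts ∧ G.Adj a b) := by
    intro a b
    simp only [hTs, Set.mem_union, SimpleGraph.Subgraph.mem_edgeSet, Set.mem_setOf_eq]
    refine or_congr Iff.rfl ⟨?_, ?_⟩
    · rintro ⟨c, d, h1, h2, h3, h4⟩
      rcases Sym2.eq_iff.1 h4 with ⟨rfl, rfl⟩ | ⟨rfl, rfl⟩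
      · exact Or.inl ⟨h1, h2, h3⟩
      · exact Or.inr ⟨h1, h2, h3.symm⟩
    · rintro (⟨h1, h2, h3⟩ | ⟨h1, h2, h3⟩)
      · exact ⟨a, b, h1, h2, h3, rfl⟩
      · exact ⟨b, a, h1, h2, h3.symm, Sym2.eq_swap⟩
  have memM : ∀ a b, s(a, b) ∈ M ↔ a ∈ T.verts ∧ b ∈ T.verts ∧ G.Adj a b ∧ ¬ T.Adj a b := by
    intro a b
    simp only [hM, Set.mem_setOf_eq]
    constructor
    · rintro ⟨c, d, h1, h2, h3, h5, h4⟩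
      rcases Sym2.eq_iff.1 h4 with ⟨rfl, rfl⟩ | ⟨rfl, rfl⟩
      · exact ⟨h1, h2, h3, h5⟩
      · exact ⟨h2, h1, h3.symm, fun h => h5 h.symm⟩
    · rintro ⟨h1, h2, h3, h4⟩
      exact ⟨a, b, h1, h2, h3, h4, rfl⟩
  have memC : ∀ a b, s(a, b) ∈ C ↔ a ∉ T.verts ∧ b ∉ T.verts ∧ G.Adj a b := by
    intro a b
    simp only [hC, Set.mem_iUnion, Set.mem_setOf_eq]
    constructor
    · rintro ⟨i, hi⟩
      exact ⟨hTdisj i a ((w i).fst_mem_support_of_mem_edges hi),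
        hTdisj i b ((w i).snd_mem_support_of_mem_edges hi), (w i).adj_of_mem_edges hi⟩
    · rintro ⟨h1, h2, h3⟩
      obtain ⟨i, hi⟩ := (hcover a).resolve_left h1
      obtain ⟨j, hj⟩ := (hcover b).resolve_left h2
      exact ⟨i, (hnoedge i j a b hi hj h3).2⟩
  have hTadj : ∀ a b, T.Adj a b → a ∈ T.verts ∧ b ∈ T.verts ∧ G.Adj a b :=
    fun a b h => ⟨h.fst_mem, h.snd_mem, T.adj_sub h⟩
  refine ⟨Ts, M, C, ?_, ?_, ?_, ?_, ⟨?_, ?_⟩, ?_, ⟨ι, inferInstance, x, w, hcyc, hcycdisj, hC⟩⟩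
  · ext e
    induction e with | _ a b =>
    simp only [Set.mem_union, memTs, memM, memC, SimpleGraph.mem_edgeSet]
    have := hTadj a b
    tauto
  · rw [Set.disjoint_left]
    intro e
    induction e with | _ a b =>
    rw [memTs, memM]
    tauto
  · rw [Set.disjoint_left]
    intro e
    induction e with | _ a b =>
    rw [memTs, memC]
    have := hTadj a b
    tauto
  · rw [Set.disjoint_left]
    intro e
    induction e with | _ a b =>
    rw [memM, memC]
    tauto
  · -- connected
    set H := SimpleGraph.fromEdgeSet Ts
    let f : T.coe →g H := ⟨fun v => v.1, by
      intro a b h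
      have h' : T.Adj a.1 b.1 := h
      exact (SimpleGraph.fromEdgeSet_adj _).2 ⟨(memTs _ _).2 (Or.inl h'), (T.adj_sub h').ne⟩⟩
    have hin : ∀ a b, a ∈ T.verts → b ∈ T.verts → H.Reachable a b := fun a b ha hb =>
      (hT.connected.preconnected ⟨a, ha⟩ ⟨b, hb⟩).map f
    have hto : ∀ a, ∃ b ∈ T.verts, H.Reachable a b := by
      intro a
      by_cases ha : a ∈ T.verts
      · exact ⟨a, ha, .refl _⟩
      · obtain ⟨b, ⟨hb, hab⟩, -⟩ := huniq a ha
        refine ⟨b, hb, SimpleGraph.Adj.reachable ?_⟩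
        exact (SimpleGraph.fromEdgeSet_adj _).2
          ⟨(memTs _ _).2 (Or.inr (Or.inr ⟨hb, ha, hab.symm⟩)), hab.ne'⟩
    obtain ⟨r⟩ := hT.connected.nonempty
    haveI : Nonempty V := ⟨r.1⟩
    refine ⟨fun a b => ?_⟩
    obtain ⟨a', ha', h1⟩ := hto a
    obtain ⟨b', hb', h2⟩ := hto b
    exact h1.trans ((hin _ _ ha' hb').trans h2.symm)
  · -- acyclic
    intro v p hp
    have hsupp : ∀ u ∈ p.support, u ∈ T.verts := by
      intro u hu
      by_contra hn
      obtain ⟨a, -, ha⟩ := huniq u hn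
      have h2 := hp.ncard_neighborSet_toSubgraph_eq_two hu
      have hsub : p.toSubgraph.neighborSet u ⊆ {a} := by
        intro c hc
        have hadj := (SimpleGraph.fromEdgeSet_adj _).1 (p.toSubgraph.adj_sub hc)
        apply ha
        rcases (memTs _ _).1 hadj.1 with h | h | h
        · exact absurd h.fst_mem hn
        · exact absurd h.1 hn
        · exact ⟨h.1, h.2.2.symm⟩
      have := Set.ncard_le_ncard hsub
      rw [h2, Set.ncard_singleton] at this
      omega
    let g : (SimpleGraph.fromEdgeSet Ts).induce T.verts →g T.coe := ⟨id, by
      intro a b h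
      have hadj := (SimpleGraph.fromEdgeSet_adj _).1 (SimpleGraph.comap_adj.1 h)
      rcases (memTs _ _).1 hadj.1 with h | h | h
      · exact h
      · exact absurd b.2 h.2.1
      · exact absurd a.2 h.2.1⟩
    have hq : (p.induce T.verts hsupp).IsCycle := by
      rw [← SimpleGraph.Walk.map_isCycle_iff_of_injective
        (f := (SimpleGraph.Embedding.induce T.verts).toHom) Subtype.val_injective]
      rw [SimpleGraph.Walk.map_induce]
      exact hp
    exact hT.isAcyclic _ (hq.map (f := g) Function.injective_id)
  · -- matching
    have hmain : ∀ v a b, s(v, a) ∈ M → s(v, b) ∈ M → a = b := by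
      intro v a b ha hb
      rw [memM] at ha hb
      by_contra hab
      obtain ⟨hv, haT, hva, hna⟩ := ha
      obtain ⟨-, hbT, hvb, hnb⟩ := hb
      obtain ⟨q⟩ := hT.connected.preconnected ⟨v, hv⟩ ⟨a, haT⟩
      have hc : ∃ c, T.Adj v c := by
        cases q with
        | nil => exact absurd rfl hva.ne
        | cons h q => exact ⟨_, h⟩
      obtain ⟨c, hc⟩ := hc
      have hca : c ≠ a := by rintro rfl; exact hna hc
      have hcb : c ≠ b := by rintro rfl; exact hnb hc
      have hN : G.neighborFinset v = {a, b, c} := by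
        symm
        apply Finset.eq_of_subset_of_card_le
        · intro d hd
          simp only [Finset.mem_insert, Finset.mem_singleton] at hd
          rw [SimpleGraph.mem_neighborFinset]
          rcases hd with rfl | rfl | rfl
          exacts [hva, hvb, T.adj_sub hc]
        · rw [SimpleGraph.card_neighborFinset_eq_degree, hcubic,
            Finset.card_eq_three.2 ⟨a, b, c, hab, hca.symm, hcb.symm, rfl⟩]
      have hN' : ∀ d, G.Adj v d → d = a ∨ d = b ∨ d = c := by
        intro d hd
        rw [← SimpleGraph.mem_neighborFinset, hN] at hd
        simpa using hd
      obtain ⟨i, d, hd, hvd⟩ := hpendant v hv ⟨c, hc, fun d hd => by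
        rcases hN' d (T.adj_sub hd) with rfl | rfl | rfl
        · exact absurd hd hna
        · exact absurd hd hnb
        · rfl⟩
      have hdT := hTdisj i d hd
      rcases hN' d hvd with rfl | rfl | rfl
      exacts [hdT haT, hdT hbT, hdT hc.snd_mem]
    intro e he f hf hef v hve hvf
    obtain ⟨a, rfl⟩ := hve
    obtain ⟨b, rfl⟩ := hvf
    exact hef (by rw [hmain v a b he hf])
end

section
/- Let G be a finite simple graph, let Q be a path in G, and let C be a cycle of G formed by Q, i.e., |E(C) \ E(Q)| = 1 (so every vertex of C lies on Q). Then there exists a chordless cycle C' of G formed by Q, i.e., a cycle C' with |E(C') \ E(Q)| = 1 such that no edge of G outside E(C') joins two vertices of C'. -/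
open SimpleGraph in
theorem aux_seg {V : Type*} {G : SimpleGraph V} {u v : V} (Q : G.Walk u v) (hQ : Q.IsPath)
    (i n : ℕ) (h : i + n ≤ Q.length) :
    ∃ P : G.Walk (Q.getVert i) (Q.getVert (i+n)), P.IsPath ∧
      (∀ c, c ∈ P.support ↔ ∃ k, i ≤ k ∧ k ≤ i + n ∧ c = Q.getVert k) ∧
      (∀ e, e ∈ P.edges ↔ ∃ k, i ≤ k ∧ k < i + n ∧ e = s(Q.getVert k, Q.getVert (k+1))) := by
  induction n with
  | zero =>
    refine ⟨Walk.nil, Walk.IsPath.nil, ?_, ?_⟩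
    · intro c
      simp only [Walk.support_nil, List.mem_singleton]
      constructor
      · rintro rfl; exact ⟨i, le_rfl, le_rfl, rfl⟩
      · rintro ⟨k, h1, h2, rfl⟩
        have : k = i := by omega
        rw [this]
    · intro e
      simp only [Walk.edges_nil, List.not_mem_nil, false_iff]
      rintro ⟨k, h1, h2, _⟩
      omega
  | succ n ih =>
    obtain ⟨P, hP, hs, he⟩ := ih (by omega)
    have hadj : G.Adj (Q.getVert (i+n)) (Q.getVert (i+(n+1))) :=
      Q.adj_getVert_succ (by omega)
    refine ⟨P.concat hadj, ?_, ?_, ?_⟩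
    · apply hP.concat
      rw [hs]
      rintro ⟨k, h1, h2, h3⟩
      have := hQ.getVert_injOn (by simp; omega) (by simp; omega) h3
      omega
    · intro c
      rw [Walk.support_concat, List.mem_append, hs, List.mem_singleton]
      constructor
      · rintro (⟨k, h1, h2, h3⟩ | h3)
        · exact ⟨k, h1, by omega, h3⟩
        · exact ⟨_, by omega, le_rfl, h3⟩
      · rintro ⟨k, h1, h2, h3⟩
        by_cases hk : k = i + (n+1)
        · subst hk; exact Or.inr h3
        · exact Or.inl ⟨k, h1, by omega, h3⟩
    · intro e
      rw [Walk.edges_concat, List.concat_eq_append, List.mem_append, he, List.mem_singleton]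
      constructor
      · rintro (⟨k, h1, h2, h3⟩ | h3)
        · exact ⟨k, h1, by omega, h3⟩
        · exact ⟨i+n, by omega, by omega, h3⟩
      · rintro ⟨k, h1, h2, h3⟩
        by_cases hk : k = i + n
        · subst hk; exact Or.inr h3
        · exact Or.inl ⟨k, h1, by omega, h3⟩

open SimpleGraph in
theorem aux_edges {V : Type*} {G : SimpleGraph V} {u v : V} (Q : G.Walk u v) (hQ : Q.IsPath)
    (e : Sym2 V) :
    e ∈ Q.edges ↔ ∃ k, k < Q.length ∧ e = s(Q.getVert k, Q.getVert (k+1)) := by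
  clear hQ
  induction Q with
  | nil => simp
  | cons h p ih =>
    rw [Walk.edges_cons, List.mem_cons, ih]
    constructor
    · rintro (h1 | ⟨k, h1, h2⟩)
      · exact ⟨0, by simp, by simpa using h1⟩
      · exact ⟨k+1, by simpa using h1, by simpa using h2⟩
    · rintro ⟨k, h1, h2⟩
      cases k with
      | zero => left; simpa using h2
      | succ k => right; exact ⟨k, by simpa using h1, by simpa using h2⟩

open SimpleGraph in
theorem aux_mem {V : Type*} [DecidableEq V] {G : SimpleGraph V} {u v : V} (Q : G.Walk u v)
    {x : V} (C : G.Walk x x) (hC : C.IsCycle) (e : Sym2 V)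
    (he : ∀ f ∈ C.edges, f ≠ e → f ∈ Q.edges) (a : V) (ha : a ∈ C.support) : a ∈ Q.support := by
  have hC' := hC.rotate ha
  have hed : ∀ f, f ∈ (C.rotate a ha).edges → f ∈ C.edges := fun f hf =>
    (C.rotate_edges a ha).mem_iff.1 hf
  have hne := hC'.snd_ne_penultimate
  have h1 := Walk.mk_start_snd_mem_edges hC'.not_nil
  have h2 := Walk.mk_penultimate_end_mem_edges hC'.not_nil
  by_cases h : s(a, (C.rotate a ha).snd) = e
  · refine Walk.snd_mem_support_of_mem_edges _ (he _ (hed _ h2) ?_)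
    rintro h3
    rw [← h, Sym2.eq_swap, Sym2.congr_right] at h3
    exact hne h3.symm
  · exact Walk.fst_mem_support_of_mem_edges _ (he _ (hed _ h1) h)


/-- If a cycle `C` of a finite simple graph `G` is formed by a path `Q`
(that is, `|E(C) \ E(Q)| = 1`), then there exists a chordless cycle `C'` of
`G` formed by `Q`, i.e. a cycle `C'` with `|E(C') \ E(Q)| = 1` such that no
edge of `G` outside `E(C')` joins two vertices of `C'`. -/
theorem exists_chordless_cycle_formed_by_path
    {V : Type*} [Fintype V] [DecidableEq V] (G : SimpleGraph V)
    {u v : V} (Q : G.Walk u v) (hQ : Q.IsPath)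
    {x : V} (C : G.Walk x x) (hC : C.IsCycle)
    (hformed : (C.edges.toFinset \ Q.edges.toFinset).card = 1) :
    ∃ (y : V) (C' : G.Walk y y),
      C'.IsCycle ∧
      (C'.edges.toFinset \ Q.edges.toFinset).card = 1 ∧
      -- `C'` is chordless: any edge of `G` joining two vertices of `C'`
      -- is an edge of `C'`
      (∀ a b : V, a ∈ C'.support → b ∈ C'.support → G.Adj a b →
        s(a, b) ∈ C'.edges) := by
  classical
  have key : ∃ n i : ℕ, 2 ≤ n ∧ i + n ≤ Q.length ∧ G.Adj (Q.getVert i) (Q.getVert (i+n)) := by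
    obtain ⟨e, he⟩ := Finset.card_eq_one.1 hformed
    have hmem : ∀ f, (f ∈ C.edges ∧ f ∉ Q.edges) ↔ f = e := by
      intro f
      have : f ∈ C.edges.toFinset \ Q.edges.toFinset ↔ f ∈ ({e} : Finset _) := by rw [he]
      simpa using this
    have hall : ∀ f ∈ C.edges, f ≠ e → f ∈ Q.edges := by
      intro f hf hne
      by_contra hq
      exact hne ((hmem f).1 ⟨hf, hq⟩)
    obtain ⟨heC, heQ⟩ := (hmem e).2 rfl
    induction e using Sym2.ind with
    | _ a b =>
    have ha := aux_mem Q C hC _ hall a (C.fst_mem_support_of_mem_edges heC)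
    have hb := aux_mem Q C hC _ hall b (C.snd_mem_support_of_mem_edges heC)
    have hadj : G.Adj a b := C.adj_of_mem_edges heC
    obtain ⟨k, rfl, hk⟩ := SimpleGraph.Walk.mem_support_iff_exists_getVert.1 ha
    obtain ⟨l, rfl, hl⟩ := SimpleGraph.Walk.mem_support_iff_exists_getVert.1 hb
    rw [aux_edges Q hQ] at heQ
    rcases lt_trichotomy k l with h | h | h
    · obtain ⟨n, rfl⟩ := Nat.exists_eq_add_of_lt h
      refine ⟨n+1, k, ?_, hl, hadj⟩
      by_contra hn
      have : n = 0 := by omega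
      subst this
      exact heQ ⟨k, by omega, rfl⟩
    · subst h; exact absurd hadj (G.irrefl)
    · obtain ⟨n, rfl⟩ := Nat.exists_eq_add_of_lt h
      refine ⟨n+1, l, ?_, hk, hadj.symm⟩
      by_contra hn
      have : n = 0 := by omega
      subst this
      exact heQ ⟨l, by omega, Sym2.eq_swap⟩
  obtain ⟨i, hn2, hin, hadj⟩ := Nat.find_spec key
  have hmin : ∀ m k, m < Nat.find key → 2 ≤ m → k + m ≤ Q.length →
      ¬ G.Adj (Q.getVert k) (Q.getVert (k+m)) :=
    fun m k hm h2 h3 h4 => Nat.find_min key hm ⟨k, h2, h3, h4⟩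
  generalize Nat.find key = n at *
  obtain ⟨P, hP, hs, he⟩ := aux_seg Q hQ i n hin
  have inj : ∀ k l, k ≤ Q.length → l ≤ Q.length → Q.getVert k = Q.getVert l → k = l :=
    fun k l hk hl h => hQ.getVert_injOn hk hl h
  have hnotQ : s(Q.getVert (i+n), Q.getVert i) ∉ Q.edges := by
    rw [aux_edges Q hQ]
    rintro ⟨k, hk, h⟩
    rcases Sym2.eq_iff.1 h with ⟨h1, h2⟩ | ⟨h1, h2⟩
    · have := inj _ _ (by omega) (by omega) h1
      have := inj _ _ (by omega) (by omega) h2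
      omega
    · have := inj _ _ (by omega) (by omega) h1
      have := inj _ _ (by omega) (by omega) h2
      omega
  have hPQ : ∀ e ∈ P.edges, e ∈ Q.edges := by
    intro e h
    obtain ⟨k, h1, h2, h3⟩ := (he e).1 h
    exact (aux_edges Q hQ e).2 ⟨k, by omega, h3⟩
  refine ⟨_, SimpleGraph.Walk.cons hadj.symm P, ?_, ?_, ?_⟩
  · exact (SimpleGraph.Walk.cons_isCycle_iff _ _).2 ⟨hP, fun h => hnotQ (hPQ _ h)⟩
  · rw [Finset.card_eq_one]
    refine ⟨s(Q.getVert (i+n), Q.getVert i), ?_⟩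
    ext f
    simp only [SimpleGraph.Walk.edges_cons, Finset.mem_sdiff, List.mem_toFinset, List.mem_cons,
      Finset.mem_singleton]
    constructor
    · rintro ⟨h | h, h'⟩
      · exact h
      · exact absurd (hPQ _ h) h'
    · rintro rfl
      exact ⟨Or.inl rfl, hnotQ⟩
  · have hsup : ∀ c, c ∈ (SimpleGraph.Walk.cons hadj.symm P).support →
        ∃ k, i ≤ k ∧ k ≤ i + n ∧ c = Q.getVert k := by
      intro c hc
      rw [SimpleGraph.Walk.support_cons, List.mem_cons] at hc
      rcases hc with rfl | hc
      · exact ⟨i+n, by omega, le_rfl, rfl⟩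
      · exact (hs c).1 hc
    have main : ∀ k l, i ≤ k → l ≤ i + n → k < l → G.Adj (Q.getVert k) (Q.getVert l) →
        s(Q.getVert k, Q.getVert l) ∈ (SimpleGraph.Walk.cons hadj.symm P).edges := by
      intro k l hk hl hkl hA
      obtain ⟨m, rfl⟩ := Nat.exists_eq_add_of_lt hkl
      rw [SimpleGraph.Walk.edges_cons, List.mem_cons]
      by_cases hm : m = 0
      · subst hm
        exact Or.inr ((he _).2 ⟨k, hk, by omega, rfl⟩)
      · by_cases hmn : m + 1 < n
        · exact absurd hA (hmin (m+1) k hmn (by omega) (by omega))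
        · have h1 : k = i := by omega
          have h2 : k + m + 1 = i + n := by omega
          rw [h2, h1]
          exact Or.inl Sym2.eq_swap
    intro a b ha hb hab
    obtain ⟨k, hk1, hk2, rfl⟩ := hsup a ha
    obtain ⟨l, hl1, hl2, rfl⟩ := hsup b hb
    rcases lt_trichotomy k l with h | h | h
    · exact main k l hk1 hl2 h hab
    · subst h; exact absurd hab (G.irrefl)
    · rw [Sym2.eq_swap]; exact main l k hl1 hk2 h hab.symm
end

section
/- Let G be a connected cubic graph (every vertex has degree exactly 3) that is traceable, i.e., G contains a Hamiltonian path. Then the edge set of G can be decomposed into a spanning tree of G, a matching, and a family of vertex-disjoint cycles. (Hoffmann-Ostenhof's conjecture holds for traceable cubic graphs.) -/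
namespace HO

def Good {V : Type*} (G : SimpleGraph V) : Prop :=
  ∃ (S : Set V) (m : V → V) (rank : V → ℕ),
    (∀ x ∈ S, ∃ y z, y ≠ z ∧ y ∈ S ∧ z ∈ S ∧ G.Adj x y ∧ G.Adj x z ∧
      ∀ w ∈ S, G.Adj x w → w = y ∨ w = z) ∧
    (∃ r, r ∉ S ∧ ∀ x, x ∉ S →
      Relation.ReflTransGen (fun a b => G.Adj a b ∧ a ∉ S ∧ b ∉ S) x r) ∧
    (∀ x, m (m x) = x) ∧
    (∀ x y z, x ∉ S → y ∉ S → z ∉ S → G.Adj x y → m x ≠ y → G.Adj x z → m x ≠ z →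
      rank y ≤ rank x → rank z ≤ rank x → y = z)

lemma acyclic_of_rank {V α : Type*} [LinearOrder α] (H : SimpleGraph V) (rank : V → α)
    (h : ∀ x y z, H.Adj x y → H.Adj x z → rank y ≤ rank x → rank z ≤ rank x → y = z) :
    H.IsAcyclic := by
  classical
  intro v c hc
  obtain ⟨x, hx, hmax⟩ := c.support.toFinset.exists_max_image rank ⟨v, by simp⟩
  simp only [List.mem_toFinset] at hx hmax
  have hc' := hc.rotate hx
  have hs : ∀ y ∈ (c.rotate x hx).support, y ∈ c.support := by
    intro y hy
    simpa using hy
  apply hc'.snd_ne_penultimate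
  have h1 : H.Adj x (c.rotate x hx).snd := (c.rotate x hx).adj_snd hc'.not_nil
  have h2 : H.Adj (c.rotate x hx).penultimate x := (c.rotate x hx).adj_penultimate hc'.not_nil
  exact h x _ _ h1 h2.symm (hmax _ (hs _ (SimpleGraph.Walk.getVert_mem_support _ _)))
    (hmax _ (hs _ (SimpleGraph.Walk.getVert_mem_support _ _)))

lemma cycles_of_isCycles {V : Type*} [Fintype V] (G H : SimpleGraph V) (hHG : H ≤ G)
    (hH : H.IsCycles) :
    ∃ (ι : Type) (_ : Fintype ι) (x : ι → V)
          (w : ∀ i : ι, G.Walk (x i) (x i)),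
        (∀ i, (w i).IsCycle) ∧
        (Pairwise fun i j => ∀ v : V, v ∈ (w i).support → v ∉ (w j).support) ∧
        H.edgeSet = ⋃ i, {e : Sym2 V | e ∈ (w i).edges} := by
  classical
  let I := {c : H.ConnectedComponent // ∃ v ∈ c.supp, (H.neighborSet v).Nonempty}
  have hfin : Finite I := inferInstance
  obtain ⟨n, ⟨e⟩⟩ := Finite.exists_equiv_fin I
  choose x hx hn using fun i : Fin n => (e.symm i).2
  choose p hp hpv using fun i : Fin n =>
    hH.exists_cycle_toSubgraph_verts_eq_connectedComponentSupp (hx i) (hn i)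
  have hsup : ∀ i v, v ∈ (p i).support ↔ v ∈ (e.symm i).1.supp := by
    intro i v
    rw [← hpv i, SimpleGraph.Walk.mem_verts_toSubgraph]
  refine ⟨Fin n, inferInstance, x, fun i => (p i).mapLe hHG, fun i => ?_, ?_, ?_⟩
  · exact (hp i).mapLe hHG
  · intro i j hij v hv hv'
    simp only [SimpleGraph.Walk.support_mapLe_eq_support] at hv hv'
    rw [hsup] at hv hv'
    apply hij
    apply e.symm.injective
    apply Subtype.ext
    rw [SimpleGraph.ConnectedComponent.mem_supp_iff] at hv hv'
    rw [← hv, ← hv']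
  · ext d
    simp only [Set.mem_iUnion, Set.mem_ofPred_eq, SimpleGraph.Walk.edges_mapLe_eq_edges]
    constructor
    · induction d with | h a b =>
      intro hab
      rw [SimpleGraph.mem_edgeSet] at hab
      let c : I := ⟨H.connectedComponentMk a, a, by simp, b, hab⟩
      refine ⟨e c, ?_⟩
      have ha : a ∈ (p (e c)).support := by
        rw [hsup]; simp [c]
      rw [← SimpleGraph.Walk.adj_toSubgraph_iff_mem_edges]
      have h2 := (hp (e c)).ncard_neighborSet_toSubgraph_eq_two ha
      have h3 := hH (v := a) ⟨b, hab⟩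
      have := Set.eq_of_subset_of_ncard_le ((p (e c)).toSubgraph.neighborSet_subset a)
        (by rw [h2, h3]) (Set.toFinite _)
      have hb : b ∈ H.neighborSet a := hab
      rw [← this] at hb
      exact hb
    · rintro ⟨i, hi⟩
      exact (p i).edges_subset_edgeSet hi

theorem Good.main {V : Type*} [Fintype V] [DecidableEq V] (G : SimpleGraph V) [DecidableRel G.Adj]
    (hcubic : ∀ v : V, G.degree v = 3) (hg : Good G) :
    ∃ (T M C : Set (Sym2 V)),
      T ∪ M ∪ C = G.edgeSet ∧
      Disjoint T M ∧ Disjoint T C ∧ Disjoint M C ∧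
      (SimpleGraph.fromEdgeSet T).IsTree ∧
      M.Pairwise (fun e f => ∀ v : V, v ∈ e → v ∉ f) ∧
      (∃ (ι : Type) (_ : Fintype ι) (x : ι → V)
          (w : ∀ i : ι, G.Walk (x i) (x i)),
        (∀ i, (w i).IsCycle) ∧
        (Pairwise fun i j => ∀ v : V, v ∈ (w i).support → v ∉ (w j).support) ∧
        C = ⋃ i, {e : Sym2 V | e ∈ (w i).edges}) := by
  classical
  obtain ⟨S, m, rank, h2, ⟨r, hr, hconn⟩, hm, hrank⟩ := hg
  have hout : ∀ x ∈ S, ∃ w, w ∉ S ∧ G.Adj x w ∧ ∀ w', w' ∉ S → G.Adj x w' → w' = w := by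
    intro x hx
    obtain ⟨y, z, hyz, hy, hz, hxy, hxz, hu⟩ := h2 x hx
    have hc : (((G.neighborFinset x).erase y).erase z).card = 1 := by
      rw [Finset.card_erase_of_mem, Finset.card_erase_of_mem, SimpleGraph.card_neighborFinset_eq_degree,
        hcubic]
      · simpa using hxy
      · simp [hxz, hyz.symm]
    obtain ⟨w, hw⟩ := Finset.card_eq_one.mp hc
    have hwm : ∀ t, (t ≠ z ∧ t ≠ y ∧ G.Adj x t) ↔ t = w := by
      intro t
      have := congrArg (t ∈ ·) hw
      simpa using this
    have hw1 := (hwm w).2 rfl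
    refine ⟨w, ?_, hw1.2.2, ?_⟩
    · intro hwS
      rcases hu w hwS hw1.2.2 with h | h
      · exact hw1.2.1 h
      · exact hw1.1 h
    · intro w' hw' ha
      apply (hwm w').1
      refine ⟨?_, ?_, ha⟩
      · rintro rfl; exact hw' hz
      · rintro rfl; exact hw' hy
  let C : SimpleGraph V :=
    { Adj := fun a b => G.Adj a b ∧ a ∈ S ∧ b ∈ S
      symm := ⟨fun a b h => ⟨h.1.symm, h.2.2, h.2.1⟩⟩
      loopless := ⟨fun a h => G.loopless.irrefl a h.1⟩ }
  let K : SimpleGraph V :=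
    { Adj := fun a b => G.Adj a b ∧ ¬ (a ∈ S ∧ b ∈ S)
      symm := ⟨fun a b h => ⟨h.1.symm, fun h' => h.2 h'.symm⟩⟩
      loopless := ⟨fun a h => G.loopless.irrefl a h.1⟩ }
  let F : SimpleGraph V :=
    { Adj := fun a b => G.Adj a b ∧ ¬ (a ∈ S ∧ b ∈ S) ∧ ¬ (a ∉ S ∧ b ∉ S ∧ m a = b)
      symm := ⟨fun a b h => ⟨h.1.symm, fun h' => h.2.1 h'.symm,
        fun h' => h.2.2 ⟨h'.2.1, h'.1, by rw [← h'.2.2, hm]⟩⟩⟩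
      loopless := ⟨fun a h => G.loopless.irrefl a h.1⟩ }
  have hCcyc : C.IsCycles := by
    rintro x ⟨y', hy'⟩
    have hx : x ∈ S := hy'.2.1
    obtain ⟨y, z, hyz, hy, hz, hxy, hxz, hu⟩ := h2 x hx
    rw [Set.ncard_eq_two]
    refine ⟨y, z, hyz, ?_⟩
    ext t
    constructor
    · intro ht
      exact hu t ht.2.2 ht.1
    · rintro (rfl | rfl)
      · exact ⟨hxy, hx, hy⟩
      · exact ⟨hxz, hx, hz⟩
  have hKconn : K.Connected := by
    have h1 : ∀ x, x ∉ S → K.Reachable x r := by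
      intro x hx
      have := hconn x hx
      rw [SimpleGraph.reachable_iff_reflTransGen]
      refine Relation.ReflTransGen.mono ?_ _ _ this
      rintro a b ⟨h, ha, hb⟩
      exact ⟨h, fun h' => ha h'.1⟩
    have h2 : ∀ x, K.Reachable x r := by
      intro x
      by_cases hx : x ∈ S
      · obtain ⟨w, hw, hxw, _⟩ := hout x hx
        have : K.Adj x w := ⟨hxw, fun h => hw h.2⟩
        exact this.reachable.trans (h1 w hw)
      · exact h1 x hx
    have : Nonempty V := ⟨r⟩
    exact ⟨fun x y => (h2 x).trans (h2 y).symm⟩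
  have hFacyc : F.IsAcyclic := by
    apply acyclic_of_rank F (fun x => if x ∈ S then (⊤ : WithTop ℕ) else (rank x : WithTop ℕ))
    intro x y z hxy hxz hy hz
    by_cases hx : x ∈ S
    · obtain ⟨w, hw, hxw, hu⟩ := hout x hx
      have hyS : y ∉ S := fun h => hxy.2.1 ⟨hx, h⟩
      have hzS : z ∉ S := fun h => hxz.2.1 ⟨hx, h⟩
      rw [hu y hyS hxy.1, hu z hzS hxz.1]
    · have hyS : y ∉ S := by
        intro h
        simp [h, hx] at hy
      have hzS : z ∉ S := by
        intro h
        simp [h, hx] at hz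
      simp only [hx, hyS, hzS, if_false, Nat.cast_le] at hy hz
      exact hrank x y z hx hyS hzS hxy.1 (fun h => hxy.2.2 ⟨hx, hyS, h⟩) hxz.1
        (fun h => hxz.2.2 ⟨hx, hzS, h⟩) hy hz
  obtain ⟨T, hFT, hTK, hT⟩ := hKconn.exists_isTree_le_of_le_of_isAcyclic
    (H := F) (fun a b h => ⟨h.1, h.2.1⟩) hFacyc
  have hM : ∀ a b, K.Adj a b → ¬ T.Adj a b → m a = b := by
    intro a b hab hT
    by_contra hne
    exact hT (hFT ⟨hab.1, hab.2, fun h => hne h.2.2⟩)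
  refine ⟨T.edgeSet, K.edgeSet \ T.edgeSet, C.edgeSet, ?_, ?_, ?_, ?_, ?_, ?_, ?_⟩
  · ext e
    induction e with | h a b =>
    simp only [Set.mem_union, Set.mem_sdiff, SimpleGraph.mem_edgeSet]
    constructor
    · rintro ((h | h) | h)
      · exact (hTK h).1
      · exact h.1.1
      · exact h.1
    · intro h
      by_cases hS : a ∈ S ∧ b ∈ S
      · exact Or.inr ⟨h, hS⟩
      · by_cases hT : T.Adj a b
        · exact Or.inl (Or.inl hT)
        · exact Or.inl (Or.inr ⟨⟨h, hS⟩, hT⟩)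
  · exact Set.disjoint_sdiff_right
  · rw [Set.disjoint_left]
    intro e
    induction e with | h a b =>
    intro h h'
    exact (hTK h).2 h'.2
  · rw [Set.disjoint_left]
    intro e
    induction e with | h a b =>
    intro h h'
    exact h.1.2 h'.2
  · rw [SimpleGraph.fromEdgeSet_edgeSet]
    exact hT
  · have key : ∀ e ∈ K.edgeSet \ T.edgeSet, ∀ v ∈ e, e = s(v, m v) := by
      intro e
      induction e with | h a b =>
      rintro ⟨h, h'⟩ v hv
      have hab := hM a b h h'
      rcases Sym2.mem_iff.1 hv with rfl | rfl
      · rw [hab]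
      · rw [← hab, hm, Sym2.eq_swap]
    intro e he f hf hef v hve hvf
    exact hef ((key e he v hve).trans (key f hf v hvf).symm)
  · exact cycles_of_isCycles G C (fun a b h => h.1) hCcyc

end HO

namespace HO

def H (n a b i j : ℕ) : Prop :=
  i + 1 = j ∨ j + 1 = i ∨ (i = 0 ∧ j = a) ∨ (i = a ∧ j = 0) ∨
    (i + 1 = n ∧ j = b) ∨ (i = b ∧ j + 1 = n)

structure Ham {V : Type*} (G : SimpleGraph V) (n : ℕ) (v : ℕ → V) : Prop where
  inj : ∀ i j, i < n → j < n → v i = v j → i = j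
  surj : ∀ x, ∃ i, i < n ∧ v i = x
  step : ∀ i, i + 1 < n → G.Adj (v i) (v (i + 1))

structure HP {V : Type*} (G : SimpleGraph V) (n a b : ℕ) (v : ℕ → V) (μ : ℕ → ℕ) : Prop where
  ham : Ham G n v
  hn : 4 ≤ n
  ha : 2 ≤ a ∧ a + 1 ≤ n
  hb : b + 3 ≤ n
  hab : a ≠ b
  adj : ∀ i j, i < n → j < n → (G.Adj (v i) (v j) ↔ H n a b i j ∨ (μ i = j ∧ i ≠ j))
  lt : ∀ i, i < n → μ i < n
  inv : ∀ i, i < n → μ (μ i) = i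
  notH : ∀ i, i < n → ¬ H n a b i (μ i)
  ne : ∀ i, i < n → i ≠ a → i ≠ b → μ i ≠ i
  fa : a + 2 ≤ n → μ a = a
  fb : 1 ≤ b → μ b = b

lemma H.symm {n a b i j : ℕ} (h : H n a b i j) : H n a b j i := by
  unfold H at *; omega

section
variable {V : Type*} [Fintype V] [DecidableEq V] {G : SimpleGraph V} [DecidableRel G.Adj]

lemma Ham.nbrs {n : ℕ} {v : ℕ → V} (hcubic : ∀ v : V, G.degree v = 3) (h : Ham G n v)
    (i : ℕ) : ∃ p q s, p < n ∧ q < n ∧ s < n ∧ p ≠ q ∧ p ≠ s ∧ q ≠ s ∧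
      ∀ j, j < n → (G.Adj (v i) (v j) ↔ j = p ∨ j = q ∨ j = s) := by
  have hc := hcubic (v i)
  rw [← SimpleGraph.card_neighborFinset_eq_degree, Finset.card_eq_three] at hc
  obtain ⟨x, y, z, hxy, hxz, hyz, hN⟩ := hc
  obtain ⟨p, hp, rfl⟩ := h.surj x
  obtain ⟨q, hq, rfl⟩ := h.surj y
  obtain ⟨s, hs, rfl⟩ := h.surj z
  refine ⟨p, q, s, hp, hq, hs, fun e => hxy (by rw [e]), fun e => hxz (by rw [e]),
    fun e => hyz (by rw [e]), fun j hj => ?_⟩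
  have : v j ∈ G.neighborFinset (v i) ↔ v j ∈ ({v p, v q, v s} : Finset V) := by rw [hN]
  simp only [SimpleGraph.mem_neighborFinset, Finset.mem_insert, Finset.mem_singleton] at this
  rw [this]
  constructor
  · rintro (e | e | e)
    · exact Or.inl (h.inj _ _ hj hp e)
    · exact Or.inr (Or.inl (h.inj _ _ hj hq e))
    · exact Or.inr (Or.inr (h.inj _ _ hj hs e))
  · rintro (e | e | e) <;> simp [e]

lemma hp_exists {n a b : ℕ} {v : ℕ → V} (hcubic : ∀ v : V, G.degree v = 3) (h : Ham G n v)
    (hn : 4 ≤ n) (ha : 2 ≤ a ∧ a + 1 ≤ n) (hb : b + 3 ≤ n) (hab : a ≠ b)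
    (h0 : G.Adj (v 0) (v a)) (h1 : G.Adj (v (n - 1)) (v b)) : ∃ μ, HP G n a b v μ := by
  classical
  have hHadj : ∀ i j, i < n → j < n → H n a b i j → G.Adj (v i) (v j) := by
    intro i j hi hj hH
    rcases hH with rfl | rfl | ⟨rfl, rfl⟩ | ⟨rfl, rfl⟩ | ⟨e, rfl⟩ | ⟨rfl, e⟩
    · exact h.step _ hj
    · exact (h.step _ hi).symm
    · exact h0
    · exact h0.symm
    · obtain rfl : i = n - 1 := by omega
      exact h1
    · obtain rfl : j = n - 1 := by omega
      exact h1.symm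
  have huniq : ∀ i j k, i < n → j < n → k < n → G.Adj (v i) (v j) → ¬ H n a b i j →
      G.Adj (v i) (v k) → ¬ H n a b i k → j = k := by
    intro i j k hi hj hk hij hH hik hH'
    obtain ⟨p, q, s, hp, hq, hs, hpq, hps, hqs, hN⟩ := h.nbrs hcubic i
    have key : ∃ x y, x < n ∧ y < n ∧ x ≠ y ∧ H n a b i x ∧ H n a b i y := by
      by_cases e0 : i = 0
      · exact ⟨1, a, by omega, by omega, by omega, by unfold H; omega, by unfold H; omega⟩
      · by_cases e1 : i + 1 = n
        · exact ⟨i - 1, b, by omega, by omega, by omega, by unfold H; omega, by unfold H; omega⟩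
        · exact ⟨i - 1, i + 1, by omega, by omega, by omega, by unfold H; omega, by unfold H; omega⟩
    obtain ⟨x, y, hx, hy, hxy, hHx, hHy⟩ := key
    have e1 := (hN x hx).1 (hHadj _ _ hi hx hHx)
    have e2 := (hN y hy).1 (hHadj _ _ hi hy hHy)
    have e3 := (hN j hj).1 hij
    have e4 := (hN k hk).1 hik
    have n1 : j ≠ x := by rintro rfl; exact hH hHx
    have n2 : j ≠ y := by rintro rfl; exact hH hHy
    have n3 : k ≠ x := by rintro rfl; exact hH' hHx
    have n4 : k ≠ y := by rintro rfl; exact hH' hHy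
    omega
  have hex : ∀ i, i < n → i ≠ a → i ≠ b →
      ∃ j, j < n ∧ G.Adj (v i) (v j) ∧ ¬ H n a b i j := by
    intro i hi hia hib
    obtain ⟨p, q, s, hp, hq, hs, hpq, hps, hqs, hN⟩ := h.nbrs hcubic i
    by_contra hcon
    push Not at hcon
    have h1 := hcon p hp ((hN p hp).2 (by simp))
    have h2 := hcon q hq ((hN q hq).2 (by simp))
    have h3 := hcon s hs ((hN s hs).2 (by simp))
    unfold H at h1 h2 h3
    omega
  have hno : ∀ i, i < n → (i = a ∧ a + 2 ≤ n) ∨ (i = b ∧ 1 ≤ b) →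
      ∀ j, j < n → G.Adj (v i) (v j) → H n a b i j := by
    intro i hi hi' j hj hij
    obtain ⟨p, q, s, hp, hq, hs, hpq, hps, hqs, hN⟩ := h.nbrs hcubic i
    have e1 := (hN (i - 1) (by omega)).1 (hHadj _ _ hi (by omega) (by unfold H; omega))
    have e2 := (hN (i + 1) (by omega)).1 (hHadj _ _ hi (by omega) (by unfold H; omega))
    have e3 := (hN j hj).1 hij
    rcases hi' with ⟨rfl, _⟩ | ⟨rfl, _⟩
    · have e4 := (hN 0 (by omega)).1 (hHadj _ _ hi (by omega) (by unfold H; omega))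
      unfold H; omega
    · have e4 := (hN (n - 1) (by omega)).1 (hHadj _ _ hi (by omega) (by unfold H; omega))
      unfold H; omega
  let μ : ℕ → ℕ := fun i =>
    if hh : ∃ j, j < n ∧ G.Adj (v i) (v j) ∧ ¬ H n a b i j then hh.choose else i
  have hμ1 : ∀ i j, i < n → j < n → G.Adj (v i) (v j) → ¬ H n a b i j → μ i = j := by
    intro i j hi hj hij hH
    have hh : ∃ j, j < n ∧ G.Adj (v i) (v j) ∧ ¬ H n a b i j := ⟨j, hj, hij, hH⟩
    have e : μ i = hh.choose := dif_pos hh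
    rw [e]
    exact huniq i _ _ hi hh.choose_spec.1 hj hh.choose_spec.2.1 hh.choose_spec.2.2 hij hH
  have hμ2 : ∀ i, i < n → (μ i < n ∧ G.Adj (v i) (v (μ i)) ∧ ¬ H n a b i (μ i)) ∨ μ i = i := by
    intro i hi
    by_cases hh : ∃ j, j < n ∧ G.Adj (v i) (v j) ∧ ¬ H n a b i j
    · left
      have e : μ i = hh.choose := dif_pos hh
      rw [e]
      exact hh.choose_spec
    · right
      exact dif_neg hh
  refine ⟨μ, h, hn, ha, hb, hab, ?_, ?_, ?_, ?_, ?_, ?_, ?_⟩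
  · intro i j hi hj
    constructor
    · intro hij
      by_cases hH : H n a b i j
      · exact Or.inl hH
      · refine Or.inr ⟨hμ1 i j hi hj hij hH, ?_⟩
        rintro rfl
        exact G.loopless.irrefl _ hij
    · rintro (hH | ⟨rfl, hne⟩)
      · exact hHadj i j hi hj hH
      · rcases hμ2 i hi with h | h
        · exact h.2.1
        · exact absurd h.symm hne
  · intro i hi
    rcases hμ2 i hi with h | h
    · exact h.1
    · omega
  · intro i hi
    rcases hμ2 i hi with h | h
    · exact hμ1 _ _ h.1 hi h.2.1.symm (fun h' => h.2.2 h'.symm)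
    · rw [h, h]
  · intro i hi
    rcases hμ2 i hi with h | h
    · exact h.2.2
    · rw [h]; unfold H; omega
  · intro i hi hia hib
    obtain ⟨j, hj, hij, hH⟩ := hex i hi hia hib
    rw [hμ1 i j hi hj hij hH]
    rintro rfl
    exact G.loopless.irrefl _ hij
  · intro haa
    rcases hμ2 a (by omega) with h | h
    · exact absurd (hno a (by omega) (by omega) _ h.1 h.2.1) h.2.2
    · exact h
  · intro haa
    rcases hμ2 b (by omega) with h | h
    · exact absurd (hno b (by omega) (by omega) _ h.1 h.2.1) h.2.2
    · exact h
end

/-- condition for `S` to be 2-regular at `x` -/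
def Cyc (n a b : ℕ) (μ : ℕ → ℕ) (S : ℕ → Prop) (x : ℕ) : Prop :=
  (∃ j k, j ≠ k ∧ j < n ∧ k < n ∧ S j ∧ S k ∧ H n a b x j ∧ H n a b x k ∧
    (∀ l, l < n → S l → H n a b x l → l = j ∨ l = k) ∧ (S (μ x) → μ x = x)) ∨
  (∃ j, j < n ∧ S j ∧ H n a b x j ∧
    (∀ l, l < n → S l → H n a b x l → l = j) ∧ S (μ x) ∧ μ x ≠ x)

def Con (n a b : ℕ) (μ : ℕ → ℕ) (S : ℕ → Prop) : ℕ → ℕ → Prop :=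
  Relation.ReflTransGen (fun i j => i < n ∧ j < n ∧ ¬ S i ∧ ¬ S j ∧
    (H n a b i j ∨ (μ i = j ∧ i ≠ j)))

section
variable {V : Type*} {G : SimpleGraph V}

lemma Con.ival {n a b : ℕ} {μ : ℕ → ℕ} {S : ℕ → Prop} {p q : ℕ} (hpq : p ≤ q) (hq : q < n)
    (h : ∀ k, p ≤ k → k ≤ q → ¬ S k) : Con n a b μ S p q := by
  induction q, hpq using Nat.le_induction with
  | base => exact Relation.ReflTransGen.refl
  | succ q hpq ih =>
    refine (ih (by omega) (fun k h1 h2 => h k h1 (by omega))).tail ?_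
    exact ⟨by omega, hq, h q hpq (by omega), h (q + 1) (by omega) le_rfl,
      Or.inl (by unfold H; omega)⟩

lemma Con.ival' {n a b : ℕ} {μ : ℕ → ℕ} {S : ℕ → Prop} {p q : ℕ} (hpq : p ≤ q) (hq : q < n)
    (h : ∀ k, p ≤ k → k ≤ q → ¬ S k) : Con n a b μ S q p := by
  induction q, hpq using Nat.le_induction with
  | base => exact Relation.ReflTransGen.refl
  | succ q hpq ih =>
    refine Relation.ReflTransGen.head ?_ (ih (by omega) (fun k h1 h2 => h k h1 (by omega)))
    exact ⟨hq, by omega, h (q + 1) (by omega) le_rfl, h q hpq (by omega),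
      Or.inl (by unfold H; omega)⟩

/-- both directions -/
lemma Con.seg {n a b : ℕ} {μ : ℕ → ℕ} {S : ℕ → Prop} (p q : ℕ) (hp : p < n) (hq : q < n)
    (h : ∀ k, (p ≤ k ∧ k ≤ q) ∨ (q ≤ k ∧ k ≤ p) → ¬ S k) : Con n a b μ S p q := by
  rcases le_total p q with h' | h'
  · exact Con.ival h' hq (fun k h1 h2 => h k (Or.inl ⟨h1, h2⟩))
  · exact Con.ival' h' hp (fun k h1 h2 => h k (Or.inr ⟨h1, h2⟩))

lemma Con.edgeH {n a b : ℕ} {μ : ℕ → ℕ} {S : ℕ → Prop} {i j : ℕ} (hi : i < n) (hj : j < n)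
    (si : ¬ S i) (sj : ¬ S j) (h : H n a b i j) : Con n a b μ S i j :=
  Relation.ReflTransGen.single ⟨hi, hj, si, sj, Or.inl h⟩

lemma Con.edgeM {n a b : ℕ} {μ : ℕ → ℕ} {S : ℕ → Prop} {i j : ℕ} (hi : i < n) (hj : j < n)
    (si : ¬ S i) (sj : ¬ S j) (h : μ i = j) (hne : i ≠ j) : Con n a b μ S i j :=
  Relation.ReflTransGen.single ⟨hi, hj, si, sj, Or.inr ⟨h, hne⟩⟩

lemma Con.trans {n a b : ℕ} {μ : ℕ → ℕ} {S : ℕ → Prop} {i j k : ℕ}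
    (h : Con n a b μ S i j) (h' : Con n a b μ S j k) : Con n a b μ S i k :=
  Relation.ReflTransGen.trans h h'

lemma good_of {n a b : ℕ} {v : ℕ → V} {μ : ℕ → ℕ} (h : HP G n a b v μ)
    (S : ℕ → Prop) (rank : ℕ → ℕ) (r : ℕ) (hr : r < n) (hrS : ¬ S r)
    (hcyc : ∀ x, x < n → S x → Cyc n a b μ S x)
    (hcon : ∀ x, x < n → ¬ S x → Con n a b μ S x r)
    (hrank : ∀ i j k, i < n → j < n → k < n → ¬ S i → ¬ S j → ¬ S k → H n a b i j → H n a b i k →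
      rank j ≤ rank i → rank k ≤ rank i → j = k) : Good G := by
  choose ix hlt hix using h.ham.surj
  have hixv : ∀ i, i < n → ix (v i) = i := fun i hi => h.ham.inj _ _ (hlt _) hi (hix _)
  refine ⟨{x | S (ix x)}, fun x => v (μ (ix x)), fun x => rank (ix x), ?_, ?_, ?_, ?_⟩
  · intro x hx
    have hx : S (ix x) := hx
    rcases hcyc _ (hlt x) hx with ⟨j, k, hjk, hj, hk, sj, sk, Hj, Hk, hu, hm⟩ |
      ⟨j, hj, sj, Hj, hu, hm, hne⟩
    · refine ⟨v j, v k, fun e => hjk (h.ham.inj _ _ hj hk e), ?_, ?_, ?_, ?_, ?_⟩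
      · change S (ix (v j)); rwa [hixv j hj]
      · change S (ix (v k)); rwa [hixv k hk]
      · rw [← hix x]; exact (h.adj _ _ (hlt x) hj).2 (Or.inl Hj)
      · rw [← hix x]; exact (h.adj _ _ (hlt x) hk).2 (Or.inl Hk)
      · intro w hw hxw
        have hw : S (ix w) := hw
        rw [← hix x, ← hix w, h.adj _ _ (hlt x) (hlt w)] at hxw
        rcases hxw with hH | ⟨e, hne⟩
        · rcases hu _ (hlt w) hw hH with e | e
          · left; rw [← e, hix]
          · right; rw [← e, hix]
        · rw [← e] at hw
          exact absurd ((hm hw).symm.trans e) hne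
    · have hmlt := h.lt _ (hlt x)
      refine ⟨v j, v (μ (ix x)), fun e => ?_, ?_, ?_, ?_, ?_, ?_⟩
      · have := h.ham.inj _ _ hj hmlt e
        exact h.notH _ (hlt x) (this ▸ Hj)
      · change S (ix (v j)); rwa [hixv j hj]
      · change S (ix (v _)); rwa [hixv _ hmlt]
      · rw [← hix x]; exact (h.adj _ _ (hlt x) hj).2 (Or.inl Hj)
      · have := (h.adj _ _ (hlt x) hmlt).2 (Or.inr ⟨rfl, hne.symm⟩)
        rwa [hix] at this
      · intro w hw hxw
        have hw : S (ix w) := hw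
        rw [← hix x, ← hix w, h.adj _ _ (hlt x) (hlt w)] at hxw
        rcases hxw with hH | ⟨e, hne⟩
        · left; rw [← hu _ (hlt w) hw hH, hix]
        · right; rw [e, hix]
  · refine ⟨v r, ?_, ?_⟩
    · change ¬ S (ix (v r)); rwa [hixv r hr]
    · intro x hx
      have := hcon _ (hlt x) hx
      rw [← hix x]
      refine Relation.ReflTransGen.lift v ?_ _ _ this
      rintro i j ⟨hi, hj, si, sj, hh⟩
      refine ⟨(h.adj _ _ hi hj).2 hh, ?_, ?_⟩
      · change ¬ S (ix (v i)); rwa [hixv i hi]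
      · change ¬ S (ix (v j)); rwa [hixv j hj]
  · intro x
    simp only
    rw [hixv _ (h.lt _ (hlt x)), h.inv _ (hlt x), hix]
  · intro x y z hx hy hz hxy mxy hxz mxz h1 h2
    have key : ∀ y, G.Adj x y → v (μ (ix x)) ≠ y → H n a b (ix x) (ix y) := by
      intro y hxy mxy
      rw [← hix x, ← hix y, h.adj _ _ (hlt x) (hlt y)] at hxy
      rcases hxy with hH | ⟨e, hne⟩
      · exact hH
      · exact absurd (by rw [e, hix]) mxy
    rw [← hix y, ← hix z, hrank _ _ _ (hlt x) (hlt y) (hlt z) hx hy hz (key y hxy mxy)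
      (key z hxz mxz) h1 h2]

def rk (n s1 s2 k : ℕ) : ℕ := if k < s1 then n + k else if k < s2 then k else 3 * n - k

lemma rank_db {n a b s1 s2 : ℕ} (S : ℕ → Prop) (h12 : s1 < s2) (hs2 : s2 < n) (h1 : S s1)
    (h2 : S s2) (ha : S a ∨ (s1 < a ∧ a < s2)) (hb : S b ∨ (s1 < b ∧ b < s2)) :
    ∀ i j k, i < n → j < n → k < n → ¬ S i → ¬ S j → ¬ S k → H n a b i j → H n a b i k →
      rk n s1 s2 j ≤ rk n s1 s2 i → rk n s1 s2 k ≤ rk n s1 s2 i → j = k := by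
  intro i j k hi hj hk si sj sk hij hik h3 h4
  have fact : ∀ x y, ¬ S x → S y → x ≠ y := by rintro x y hx hy rfl; exact hx hy
  have ha' : ∀ x, ¬ S x → x = a → s1 < a ∧ a < s2 := by
    rintro x hx rfl; exact ha.resolve_left hx
  have hb' : ∀ x, ¬ S x → x = b → s1 < b ∧ b < s2 := by
    rintro x hx rfl; exact hb.resolve_left hx
  have key : ∀ j, j < n → ¬ S j → H n a b i j → rk n s1 s2 j ≤ rk n s1 s2 i →
      j = if i < s1 then (if i = 0 then a else i - 1) else if i < s2 then i - 1 else
        if i + 1 = n then b else i + 1 := by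
    intro j hj sj hij h3
    have a1 := fact i _ si h1
    have a2 := fact i _ si h2
    have a3 := fact j _ sj h1
    have a4 := fact j _ sj h2
    have b1 := ha' i si
    have b2 := ha' j sj
    have b4 := hb' i si
    have b5 := hb' j sj
    clear fact ha' hb'
    unfold H at hij
    unfold rk at h3
    rcases hij with e | e | e | e | e | e <;> split_ifs at h3 ⊢ <;> omega
  rw [key j hj sj hij h3, key k hk sk hik h4]

end

end HO

namespace HO

lemma min_chord (μ : ℕ → ℕ) (p q : ℕ) (hinv : ∀ i, i ≤ q → μ (μ i) = i)
    (h : ∃ x y, p ≤ x ∧ x < y ∧ y ≤ q ∧ μ x = y) :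
    ∃ c1 c2, p ≤ c1 ∧ c1 < c2 ∧ c2 ≤ q ∧ μ c1 = c2 ∧ μ c2 = c1 ∧
      ∀ x, c1 ≤ x → x ≤ c2 → c1 ≤ μ x → μ x ≤ c2 → μ x = x ∨ x = c1 ∨ x = c2 := by
  classical
  have h' : ∃ d x, p ≤ x ∧ 0 < d ∧ x + d ≤ q ∧ μ x = x + d := by
    obtain ⟨x, y, h1, h2, h3, h4⟩ := h
    exact ⟨y - x, x, h1, by omega, by omega, by omega⟩
  obtain ⟨x, h1, h2, h3, h4⟩ := Nat.find_spec h'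
  have hmin := fun d (hd : d < Nat.find h') => Nat.find_min h' hd
  set d := Nat.find h'
  refine ⟨x, x + d, h1, by omega, h3, h4, by rw [← h4, hinv x (by omega)], ?_⟩
  intro z z1 z2 m1 m2
  by_contra hcon
  push Not at hcon
  rcases Nat.lt_or_ge z (μ z) with hlt | hge
  · exact hmin (μ z - z) (by omega) ⟨z, by omega, by omega, by omega, by omega⟩
  · have := hinv z (by omega)
    have e : μ (μ z) ≠ μ x := by
      rw [this]; omega
    have e2 : μ z ≠ x := fun e' => e (by rw [e'])
    exact hmin (z - μ z) (by omega) ⟨μ z, by omega, by omega, by omega, by omega⟩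

section
variable {V : Type*} {G : SimpleGraph V}

lemma hamcycle_good {n : ℕ} {v : ℕ → V} {μ : ℕ → ℕ} (h : HP G n (n - 1) 0 v μ) : Good G := by
  have hn := h.hn
  have hex : ∃ x y, 0 ≤ x ∧ x < y ∧ y ≤ n - 1 ∧ μ x = y := by
    have h1 := h.ne 1 (by omega) (by omega) (by omega)
    have h2 := h.lt 1 (by omega)
    have h3 := h.notH 1 (by omega)
    unfold H at h3
    exact ⟨1, μ 1, by omega, by omega, by omega, rfl⟩
  obtain ⟨c1, c2, -, h12, h2, m1, m2, hmin⟩ :=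
    min_chord μ 0 (n - 1) (fun i hi => h.inv i (by omega)) hex
  have hH := h.notH c1 (by omega)
  rw [m1] at hH
  unfold H at hH
  obtain ⟨r, hr, hrr⟩ : ∃ r, r < n ∧ ((c2 + 1 < n ∧ r = c2 + 1) ∨ (c2 + 1 = n ∧ r + 1 = c1)) := by
    by_cases hc : c2 + 1 < n
    · exact ⟨c2 + 1, hc, Or.inl ⟨hc, rfl⟩⟩
    · exact ⟨c1 - 1, by omega, by omega⟩
  refine good_of h (fun k => c1 ≤ k ∧ k ≤ c2) (fun k => if k < c1 then n + k else k) r hr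
    (by omega) ?_ ?_ ?_
  · intro x hx hS
    have hm := hmin x hS.1 hS.2
    by_cases e1 : x = c1
    · subst e1
      right
      exact ⟨x + 1, by omega, by omega, by unfold H; omega, by unfold H; omega, by omega, by omega⟩
    · by_cases e2 : x = c2
      · subst e2
        right
        exact ⟨x - 1, by omega, by omega, by unfold H; omega, by unfold H; omega, by omega, by omega⟩
      · left
        exact ⟨x - 1, x + 1, by omega, by omega, by omega, by omega, by omega,
          by unfold H; omega, by unfold H; omega, by unfold H; omega, by omega⟩
  · intro x hx hS
    by_cases hxc : x < c1
    · by_cases hc : c2 + 1 < n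
      · refine (Con.seg x 0 hx (by omega) (by intro k; omega)).trans ?_
        refine (Con.edgeH (j := n - 1) (by omega) (by omega) (by omega) (by omega)
          (by unfold H; omega)).trans ?_
        exact Con.seg _ _ (by omega) hr (by intro k; omega)
      · exact Con.seg _ _ (by omega) hr (by intro k; omega)
    · exact Con.seg _ _ (by omega) hr (by intro k; omega)
  · intro i j k hi hj hk si sj sk hij hik h3 h4
    unfold H at hij hik
    split_ifs at h3 h4 <;> omega

lemma theta_cross {n a b : ℕ} {v : ℕ → V} {μ : ℕ → ℕ} (h : HP G n a b v μ)
    (hb1 : 1 ≤ b) (hba : b < a) (han : a + 2 ≤ n) (x y : ℕ) (hx : x < b) (hy : a < y) (hyn : y < n)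
    (hxy : μ x = y) (n2 : ∀ s t, s < t → t ≤ x → μ s ≠ t)
    (n3 : ∀ s t, a < s → s < t → t ≤ y → μ s ≠ t) : Good G := by
  classical
  have hn := h.hn
  have hex : ∃ x, x < b ∧ a < μ x ∧ μ x ≤ y := ⟨x, hx, by omega, by omega⟩
  obtain ⟨x1, x2, x3⟩ := Nat.find_spec hex
  have hmin := fun d (hd : d < Nat.find hex) => Nat.find_min hex hd
  have hle : Nat.find hex ≤ x := Nat.find_min' hex ⟨hx, by omega, by omega⟩
  set x0 := Nat.find hex
  have hy0 : ∃ y0, μ x0 = y0 := ⟨_, rfl⟩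
  obtain ⟨y0, hy0⟩ := hy0
  rw [hy0] at x2 x3
  have fa := h.fa han
  have fb := h.fb hb1
  have hinv0 := h.inv x0 (by omega)
  rw [hy0] at hinv0
  have hmu : ∀ k, k < n → (k ≤ x0 ∨ (a ≤ k ∧ k ≤ y0)) → (μ k ≤ x0 ∨ (a ≤ μ k ∧ μ k ≤ y0)) →
      k = a ∨ k = x0 ∨ k = y0 := by
    intro k hk hS hS'
    have hi := h.inv k hk
    have hne := h.ne k hk
    have hl := h.lt k hk
    by_contra hcon
    push Not at hcon
    have f1 : μ k ≠ a := by intro e; rw [e] at hi; omega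
    have f2 : μ k ≠ x0 := by intro e; rw [e] at hi; omega
    have f3 : μ k ≠ y0 := by intro e; rw [e] at hi; omega
    rcases hS with hS | hS
    · rcases hS' with hS' | hS'
      · rcases Nat.lt_or_ge k (μ k) with h1 | h1
        · exact n2 k (μ k) h1 (by omega) rfl
        · exact n2 (μ k) k (by omega) (by omega) hi
      · exact hmin k (by omega) ⟨by omega, by omega, by omega⟩
    · rcases hS' with hS' | hS'
      · exact hmin (μ k) (by omega) ⟨by omega, by omega, by omega⟩
      · rcases Nat.lt_or_ge k (μ k) with h1 | h1
        · exact n3 k (μ k) (by omega) h1 (by omega) rfl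
        · exact n3 (μ k) k (by omega) (by omega) (by omega) hi
  have hne0 := h.notH x0 (by omega)
  unfold H at hne0
  refine good_of h (fun k => k ≤ x0 ∨ (a ≤ k ∧ k ≤ y0)) (rk n 0 a) b (by omega)
    (by omega) ?_ ?_ (rank_db _ (by omega) (by omega) (by omega) (by omega) (by omega) (by omega))
  · intro k hk hS
    have hm := hmu k hk hS
    by_cases e1 : k = x0
    · subst e1
      right
      by_cases e0 : x0 = 0
      · exact ⟨a, by omega, by omega, by unfold H; omega, by unfold H; omega, by omega, by omega⟩
      · exact ⟨x0 - 1, by omega, by omega, by unfold H; omega, by unfold H; omega, by omega, by omega⟩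
    · by_cases e2 : k = y0
      · subst e2
        right
        exact ⟨k - 1, by omega, by omega, by unfold H; omega, by unfold H; omega, by omega, by omega⟩
      · left
        by_cases e3 : k = 0
        · subst e3
          exact ⟨1, a, by omega, by omega, by omega, by omega, by omega,
            by unfold H; omega, by unfold H; omega, by unfold H; omega, by omega⟩
        · by_cases e4 : k = a
          · subst e4
            exact ⟨0, k + 1, by omega, by omega, by omega, by omega, by omega,
              by unfold H; omega, by unfold H; omega, by unfold H; omega, by omega⟩
          · exact ⟨k - 1, k + 1, by omega, by omega, by omega, by omega, by omega,
              by unfold H; omega, by unfold H; omega, by unfold H; omega, by omega⟩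
  · intro k hk hS
    by_cases hka : k < a
    · exact Con.seg _ _ (by omega) (by omega) (by intro l; omega)
    · refine (Con.seg k (n - 1) hk (by omega) (by intro k; omega)).trans ?_
      exact Con.edgeH (by omega) (by omega) (by omega) (by omega) (by unfold H; omega)

end
end HO

namespace HO

lemma first_chord (μ : ℕ → ℕ) (p q : ℕ) (hinv : ∀ i, i ≤ q → μ (μ i) = i)
    (h : ∃ x y, p ≤ x ∧ x < y ∧ y ≤ q ∧ μ x = y) :
    ∃ i j, p ≤ i ∧ i < j ∧ j ≤ q ∧ μ i = j ∧ μ j = i ∧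
      ∀ s t, p ≤ s → s < t → t < j → μ s ≠ t := by
  classical
  have h' : ∃ y x, p ≤ x ∧ x < y ∧ y ≤ q ∧ μ x = y := by
    obtain ⟨x, y, hh⟩ := h
    exact ⟨y, x, hh⟩
  obtain ⟨x, h1, h2, h3, h4⟩ := Nat.find_spec h'
  refine ⟨x, Nat.find h', h1, h2, h3, h4, ?_, ?_⟩
  · rw [← h4]; exact hinv x (by omega)
  · intro s t hs hst ht e
    exact Nat.find_min h' ht ⟨s, hs, hst, by omega, e⟩

lemma cyc_mid {n a b : ℕ} {μ : ℕ → ℕ} {S : ℕ → Prop} {x : ℕ} (h0 : 0 < x) (hn : x + 1 < n)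
    (s1 : S (x - 1)) (s2 : S (x + 1)) (sa : x = a → ¬ S 0) (sb : x = b → ¬ S (n - 1))
    (hm : S (μ x) → μ x = x) : Cyc n a b μ S x := by
  refine Or.inl ⟨x - 1, x + 1, by omega, by omega, by omega, s1, s2, by unfold H; omega,
    by unfold H; omega, ?_, hm⟩
  rintro l hl sl (e | e | e | ⟨e, rfl⟩ | e | ⟨e, e'⟩)
  · omega
  · omega
  · omega
  · exact absurd sl (sa e)
  · omega
  · obtain rfl : l = n - 1 := by omega
    exact absurd sl (sb e)

lemma cyc_l {n a b : ℕ} {μ : ℕ → ℕ} {S : ℕ → Prop} {x : ℕ} (hn : x + 1 < n)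
    (s1 : x = 0 ∨ ¬ S (x - 1)) (s2 : S (x + 1)) (s0 : x = 0 → ¬ S a) (sa : x = a → ¬ S 0)
    (sb : x = b → ¬ S (n - 1))
    (hm : S (μ x)) (hne : μ x ≠ x) : Cyc n a b μ S x := by
  refine Or.inr ⟨x + 1, by omega, s2, by unfold H; omega, ?_, hm, hne⟩
  rintro l hl sl (e | e | ⟨e, rfl⟩ | ⟨e, rfl⟩ | e | ⟨e, e'⟩)
  · omega
  · rcases s1 with s1 | s1
    · omega
    · exact absurd ((show x - 1 = l by omega) ▸ sl) s1
  · exact absurd sl (s0 e)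
  · exact absurd sl (sa e)
  · omega
  · obtain rfl : l = n - 1 := by omega
    exact absurd sl (sb e)

lemma cyc_r {n a b : ℕ} {μ : ℕ → ℕ} {S : ℕ → Prop} {x : ℕ} (hn : x < n)
    (h0 : 0 < x) (s1 : S (x - 1)) (s2 : x + 1 = n ∨ ¬ S (x + 1)) (s0 : x + 1 = n → ¬ S b)
    (sa : x = a → ¬ S 0) (sb : x = b → ¬ S (n - 1))
    (hm : S (μ x)) (hne : μ x ≠ x) : Cyc n a b μ S x := by
  refine Or.inr ⟨x - 1, by omega, s1, by unfold H; omega, ?_, hm, hne⟩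
  rintro l hl sl (e | e | e | ⟨e, rfl⟩ | ⟨e, rfl⟩ | ⟨e, e'⟩)
  · rcases s2 with s2 | s2
    · omega
    · exact absurd (e ▸ sl) s2
  · omega
  · omega
  · exact absurd sl (sa e)
  · exact absurd sl (s0 e)
  · obtain rfl : l = n - 1 := by omega
    exact absurd sl (sb e)

section
variable {V : Type*} {G : SimpleGraph V}

lemma theta_none {n a b : ℕ} {v : ℕ → V} {μ : ℕ → ℕ} (h : HP G n a b v μ)
    (hb1 : 1 ≤ b) (hba : b + 2 ≤ a) (han : a + 2 ≤ n)
    (F2 : ¬ ∃ x y, 0 ≤ x ∧ x < y ∧ y ≤ b - 1 ∧ μ x = y)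
    (F3 : ¬ ∃ x y, a + 1 ≤ x ∧ x < y ∧ y ≤ n - 1 ∧ μ x = y) : Good G := by
  have hn := h.hn
  by_cases hc : ∃ x, x < b ∧ a < μ x
  · obtain ⟨x, hx, hax⟩ := hc
    have := h.lt x (by omega)
    refine theta_cross h hb1 (by omega) han x (μ x) hx hax this rfl ?_ ?_
    · intro s t hst ht e
      exact F2 ⟨s, t, by omega, hst, by omega, e⟩
    · intro s t hs hst ht e
      exact F3 ⟨s, t, by omega, hst, by omega, e⟩
  · have fa := h.fa han
    have fb := h.fb hb1
    have hmu : ∀ k, k < n → (k ≤ b ∨ a ≤ k) → (μ k ≤ b ∨ a ≤ μ k) → μ k = k := by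
      intro k hk hS hS'
      have hi := h.inv k hk
      have hl := h.lt k hk
      by_contra hcon
      have f0 : k ≠ a := by rintro rfl; omega
      have f0' : k ≠ b := by rintro rfl; omega
      have f1 : μ k ≠ a := by intro e; rw [e] at hi; omega
      have f2 : μ k ≠ b := by intro e; rw [e] at hi; omega
      rcases hS with hS | hS
      · rcases hS' with hS' | hS'
        · rcases Nat.lt_or_ge k (μ k) with h1 | h1
          · exact F2 ⟨k, μ k, by omega, h1, by omega, rfl⟩
          · exact F2 ⟨μ k, k, by omega, by omega, by omega, hi⟩
        · exact hc ⟨k, by omega, by omega⟩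
      · rcases hS' with hS' | hS'
        · exact hc ⟨μ k, by omega, by omega⟩
        · rcases Nat.lt_or_ge k (μ k) with h1 | h1
          · exact F3 ⟨k, μ k, by omega, h1, by omega, rfl⟩
          · exact F3 ⟨μ k, k, by omega, by omega, by omega, hi⟩
    refine good_of h (fun k => k ≤ b ∨ a ≤ k) (rk n 0 a) (b + 1) (by omega)
      (by omega) ?_ ?_ (rank_db _ (by omega) (by omega) (by omega) (by omega) (by omega) (by omega))
    · intro k hk hS
      have hm := hmu k hk hS
      left
      by_cases e3 : k = 0
      · subst e3
        exact ⟨1, a, by omega, by omega, by omega, by omega, by omega,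
          by unfold H; omega, by unfold H; omega, by unfold H; omega, hm⟩
      · by_cases e4 : k = a
        · subst e4
          exact ⟨0, k + 1, by omega, by omega, by omega, by omega, by omega,
            by unfold H; omega, by unfold H; omega, by unfold H; omega, hm⟩
        · by_cases e5 : k = b
          · subst e5
            exact ⟨k - 1, n - 1, by omega, by omega, by omega, by omega, by omega,
              by unfold H; omega, by unfold H; omega, by unfold H; omega, hm⟩
          · by_cases e6 : k = n - 1
            · exact ⟨k - 1, b, by omega, by omega, by omega, by omega, by omega,
                by unfold H; omega, by unfold H; omega, by unfold H; omega, hm⟩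
            · exact ⟨k - 1, k + 1, by omega, by omega, by omega, by omega, by omega,
                by unfold H; omega, by unfold H; omega, by unfold H; omega, hm⟩
    · intro k hk hS
      exact Con.seg _ _ (by omega) (by omega) (by intro l; omega)

lemma two_iv {n a b : ℕ} {v : ℕ → V} {μ : ℕ → ℕ} (h : HP G n a b v μ) (p1 q1 p2 q2 : ℕ)
    (o1 : p1 < q1) (o2 : p2 < q2) (oq : q2 < n) (a1 : q1 < a) (a2 : a < p2) (b1 : q1 < b)
    (b2 : b < p2)
    (S : ℕ → Prop) (hSdef : ∀ k, S k ↔ (p1 ≤ k ∧ k ≤ q1) ∨ (p2 ≤ k ∧ k ≤ q2))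
    (e : ∀ k, k = p1 ∨ k = q1 ∨ k = p2 ∨ k = q2 → S (μ k) ∧ μ k ≠ k)
    (hmu : ∀ k, k < n → S k → S (μ k) → k = p1 ∨ k = q1 ∨ k = p2 ∨ k = q2) : Good G := by
  have hn := h.hn
  refine good_of h S (rk n p1 p2) a (by omega)
    (by rw [hSdef]; omega) ?_ ?_ (rank_db _ (by omega) (by omega) (by rw [hSdef]; omega)
      (by rw [hSdef]; omega) (by omega) (by omega))
  · intro k hk hS
    by_cases ee : k = p1 ∨ k = q1 ∨ k = p2 ∨ k = q2
    · have e' := e k ee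
      clear e hmu
      by_cases e1 : k = p1 ∨ k = p2
      · refine cyc_l ?_ ?_ ?_ ?_ ?_ ?_ e'.1 e'.2 <;> clear e' <;> (try simp only [hSdef]) <;> omega
      · refine cyc_r hk ?_ ?_ ?_ ?_ ?_ ?_ e'.1 e'.2 <;> clear e' <;> (try simp only [hSdef]) <;> omega
    · have hm : S (μ k) → μ k = k := fun hs => absurd (hmu k hk hS hs) ee
      rw [hSdef] at hS
      clear e hmu
      refine cyc_mid ?_ ?_ ?_ ?_ ?_ ?_ hm <;> clear hm <;> (try simp only [hSdef]) <;> omega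
  · intro k hk hS
    clear e hmu
    rw [hSdef] at hS
    by_cases k1 : k < p1
    · refine (Con.seg k 0 hk (by omega) (by intro k; rw [hSdef]; omega)).trans ?_
      exact Con.edgeH (by omega) (by omega) (by rw [hSdef]; omega) (by rw [hSdef]; omega)
        (by unfold H; omega)
    · by_cases k2 : k < p2
      · exact Con.seg _ _ (by omega) (by omega) (by intro k; rw [hSdef]; omega)
      · refine (Con.seg k (n - 1) hk (by omega) (by intro k; rw [hSdef]; omega)).trans ?_
        refine (Con.edgeH (j := b) (by omega) (by omega) (by rw [hSdef]; omega)
          (by rw [hSdef]; omega) (by unfold H; omega)).trans ?_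
        exact Con.seg _ _ (by omega) (by omega) (by intro k; rw [hSdef]; omega)

lemma theta_both {n a b : ℕ} {v : ℕ → V} {μ : ℕ → ℕ} (h : HP G n a b v μ)
    (hb1 : 1 ≤ b) (hba : b + 2 ≤ a) (han : a + 2 ≤ n)
    (F2 : ∃ x y, 0 ≤ x ∧ x < y ∧ y ≤ b - 1 ∧ μ x = y)
    (F3 : ∃ x y, a + 1 ≤ x ∧ x < y ∧ y ≤ n - 1 ∧ μ x = y) : Good G := by
  have hn := h.hn
  obtain ⟨i2, j2, -, o2, p2, m2, m2', f2⟩ :=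
    first_chord μ 0 (b - 1) (fun i hi => h.inv i (by omega)) F2
  obtain ⟨i3, j3, q3, o3, p3, m3, m3', f3⟩ :=
    first_chord μ (a + 1) (n - 1) (fun i hi => h.inv i (by omega)) F3
  by_cases hc : ∃ x, i2 ≤ x ∧ x ≤ j2 ∧ i3 ≤ μ x ∧ μ x ≤ j3
  · obtain ⟨x, hx1, hx2, hx3, hx4⟩ := hc
    have hne : x ≠ j2 := by rintro rfl; omega
    have hinv := h.inv x (by omega)
    have hne' : μ x ≠ j3 := by intro e; rw [e] at hinv; omega
    refine theta_cross h hb1 (by omega) han x (μ x) (by omega) (by omega) (by omega) rfl ?_ ?_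
    · intro s t hst ht e
      exact f2 s t (by omega) hst (by omega) e
    · intro s t hs hst ht e
      exact f3 s t (by omega) hst (by omega) e
  · have hmu : ∀ k, k < n → ((i2 ≤ k ∧ k ≤ j2) ∨ (i3 ≤ k ∧ k ≤ j3)) →
        ((i2 ≤ μ k ∧ μ k ≤ j2) ∨ (i3 ≤ μ k ∧ μ k ≤ j3)) →
        k = i2 ∨ k = j2 ∨ k = i3 ∨ k = j3 := by
      intro k hk hS hS'
      have hi := h.inv k hk
      have hl := h.lt k hk
      have hne := h.ne k hk (by omega) (by omega)
      by_contra hcon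
      push Not at hcon
      have g1 : μ k ≠ i2 := by intro e; rw [e] at hi; omega
      have g2 : μ k ≠ j2 := by intro e; rw [e] at hi; omega
      have g3 : μ k ≠ i3 := by intro e; rw [e] at hi; omega
      have g4 : μ k ≠ j3 := by intro e; rw [e] at hi; omega
      rcases hS with hS | hS
      · rcases hS' with hS' | hS'
        · rcases Nat.lt_or_ge k (μ k) with h1 | h1
          · exact f2 k (μ k) (by omega) (by omega) (by omega) rfl
          · exact f2 (μ k) k (by omega) (by omega) (by omega) hi
        · exact hc ⟨k, by omega, by omega, by omega, by omega⟩
      · rcases hS' with hS' | hS'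
        · exact hc ⟨μ k, by omega, by omega, by omega, by omega⟩
        · rcases Nat.lt_or_ge k (μ k) with h1 | h1
          · exact f3 k (μ k) (by omega) (by omega) (by omega) rfl
          · exact f3 (μ k) k (by omega) (by omega) (by omega) hi
    refine two_iv h i2 j2 i3 j3 o2 o3 (by omega) (by omega) (by omega) (by omega) (by omega)
      (fun k => (i2 ≤ k ∧ k ≤ j2) ∨ (i3 ≤ k ∧ k ≤ j3)) (fun k => Iff.rfl) ?_ hmu
    rintro k (rfl | rfl | rfl | rfl) <;> constructor <;> omega

end

section
variable {V : Type*} [Fintype V] [DecidableEq V] {G : SimpleGraph V} [DecidableRel G.Adj]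

/-- chord of the ordering `v` inside `[p, q)` -/
def Flag (G : SimpleGraph V) (v : ℕ → V) (p q : ℕ) : Prop :=
  ∃ x y, p ≤ x ∧ x + 1 < y ∧ y < q ∧ G.Adj (v x) (v y)

lemma ham_close {n : ℕ} {v : ℕ → V} (hcubic : ∀ v : V, G.degree v = 3) (h : Ham G n v)
    (hn : 4 ≤ n) (h1 : G.Adj (v 0) (v (n - 1))) : Good G := by
  obtain ⟨μ, hμ⟩ := hp_exists hcubic h hn (a := n - 1) (b := 0) (by omega) (by omega) (by omega)
    h1 h1.symm
  exact hamcycle_good hμ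

lemma theta_pair {n a b : ℕ} {v : ℕ → V} (hcubic : ∀ v : V, G.degree v = 3) (h : Ham G n v)
    (hb1 : 1 ≤ b) (hba : b + 2 ≤ a) (han : a + 2 ≤ n)
    (h0 : G.Adj (v 0) (v a)) (h1 : G.Adj (v (n - 1)) (v b))
    (hF : Flag G v 0 b ↔ Flag G v (a + 1) n) : Good G := by
  obtain ⟨μ, hμ⟩ := hp_exists hcubic h (by omega) (a := a) (b := b) (by omega) (by omega) (by omega)
    h0 h1
  have e2 : Flag G v 0 b ↔ ∃ x y, 0 ≤ x ∧ x < y ∧ y ≤ b - 1 ∧ μ x = y := by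
    constructor
    · rintro ⟨x, y, h1, h2, h3, h4⟩
      rw [hμ.adj _ _ (by omega) (by omega)] at h4
      unfold H at h4
      exact ⟨x, y, by omega, by omega, by omega, by omega⟩
    · rintro ⟨x, y, h1, h2, h3, h4⟩
      have := hμ.notH x (by omega)
      unfold H at this
      exact ⟨x, y, by omega, by omega, by omega,
        (hμ.adj _ _ (by omega) (by omega)).2 (Or.inr ⟨h4, by omega⟩)⟩
  have e3 : Flag G v (a + 1) n ↔ ∃ x y, a + 1 ≤ x ∧ x < y ∧ y ≤ n - 1 ∧ μ x = y := by
    constructor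
    · rintro ⟨x, y, h1, h2, h3, h4⟩
      rw [hμ.adj _ _ (by omega) (by omega)] at h4
      unfold H at h4
      exact ⟨x, y, by omega, by omega, by omega, by omega⟩
    · rintro ⟨x, y, h1, h2, h3, h4⟩
      have := hμ.notH x (by omega)
      unfold H at this
      exact ⟨x, y, by omega, by omega, by omega,
        (hμ.adj _ _ (by omega) (by omega)).2 (Or.inr ⟨h4, by omega⟩)⟩
  by_cases hf : Flag G v 0 b
  · exact theta_both hμ hb1 hba han (e2.1 hf) (e3.1 (hF.1 hf))
  · exact theta_none hμ hb1 hba han (fun h => hf (e2.2 h)) (fun h => hf (hF.2 (e3.2 h)))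

set_option linter.unusedSectionVars false in
lemma Ham.flip {n a : ℕ} {v : ℕ → V} (h : Ham G n v) (ha : 1 ≤ a) (han : a < n)
    (h0 : G.Adj (v 0) (v a)) : Ham G n (fun k => v (if k < a then a - 1 - k else k)) := by
  refine ⟨?_, ?_, ?_⟩
  · intro i j hi hj e
    have := h.inj _ _ (by split_ifs <;> omega) (by split_ifs <;> omega) e
    split_ifs at this <;> omega
  · intro x
    obtain ⟨i, hi, rfl⟩ := h.surj x
    by_cases hia : i < a
    · refine ⟨a - 1 - i, by omega, ?_⟩
      rw [if_pos (by omega)]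
      congr 1
      omega
    · exact ⟨i, hi, by rw [if_neg hia]⟩
  · intro i hi
    by_cases h1 : i + 1 < a
    · simp only [if_pos h1, if_pos (show i < a by omega)]
      have := h.step (a - 1 - (i + 1)) (by omega)
      rw [show a - 1 - (i + 1) + 1 = a - 1 - i by omega] at this
      exact this.symm
    · by_cases h2 : i + 1 = a
      · simp only [if_neg h1, if_pos (show i < a by omega)]
        rw [show a - 1 - i = 0 by omega, h2]
        exact h0
      · simp only [if_neg h1, if_neg (show ¬ i < a by omega)]
        exact h.step i hi

set_option linter.unusedSectionVars false in
lemma Ham.rev {n : ℕ} {v : ℕ → V} (h : Ham G n v) : Ham G n (fun k => v (n - 1 - k)) := by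
  refine ⟨?_, ?_, ?_⟩
  · intro i j hi hj e
    have := h.inj _ _ (by omega) (by omega) e
    omega
  · intro x
    obtain ⟨i, hi, rfl⟩ := h.surj x
    refine ⟨n - 1 - i, by omega, ?_⟩
    congr 1
    omega
  · intro i hi
    have := h.step (n - 1 - (i + 1)) (by omega)
    rw [show n - 1 - (i + 1) + 1 = n - 1 - i by omega] at this
    exact this.symm

lemma theta_good {n a b : ℕ} {v : ℕ → V} (hcubic : ∀ v : V, G.degree v = 3) (h : Ham G n v)
    (hn : 4 ≤ n) (hb1 : 1 ≤ b) (hba : b < a) (han : a + 2 ≤ n)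
    (h0 : G.Adj (v 0) (v a)) (h1 : G.Adj (v (n - 1)) (v b)) : Good G := by
  -- flipping the first `a` vertices
  have flip : ∀ {v : ℕ → V} {a b : ℕ}, Ham G n v → 1 ≤ b → b < a → a + 2 ≤ n →
      G.Adj (v 0) (v a) → G.Adj (v (n - 1)) (v b) →
      (Flag G v (b + 1) a ↔ Flag G v (a + 1) n) → Good G := by
    intro v a b h hb1 hba han h0 h1 hF
    have h' := h.flip (a := a) (by omega) (by omega) h0
    by_cases hba' : b + 1 = a
    · refine ham_close hcubic h' hn ?_
      simp only [if_pos (show 0 < a by omega), if_neg (show ¬ n - 1 < a by omega)]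
      rw [show a - 1 - 0 = b by omega]
      exact h1.symm
    · refine theta_pair (a := a) (b := a - 1 - b) hcubic h' (by omega) (by omega) han ?_ ?_ ?_
      · simp only [if_pos (show 0 < a by omega), if_neg (show ¬ a < a by omega)]
        have := h.step (a - 1) (by omega)
        rw [show a - 1 + 1 = a by omega] at this
        exact this
      · simp only [if_pos (show a - 1 - b < a by omega), if_neg (show ¬ n - 1 < a by omega)]
        rw [show a - 1 - (a - 1 - b) = b by omega]
        exact h1
      · have e1 : Flag G (fun k => v (if k < a then a - 1 - k else k)) 0 (a - 1 - b) ↔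
            Flag G v (b + 1) a := by
          constructor
          · rintro ⟨x, y, p1, p2, p3, p4⟩
            simp only [if_pos (show x < a by omega), if_pos (show y < a by omega)] at p4
            exact ⟨a - 1 - y, a - 1 - x, by omega, by omega, by omega, p4.symm⟩
          · rintro ⟨x, y, p1, p2, p3, p4⟩
            refine ⟨a - 1 - y, a - 1 - x, by omega, by omega, by omega, ?_⟩
            simp only [if_pos (show a - 1 - x < a by omega), if_pos (show a - 1 - y < a by omega)]
            rw [show a - 1 - (a - 1 - x) = x by omega, show a - 1 - (a - 1 - y) = y by omega]
            exact p4.symm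
        have e2 : Flag G (fun k => v (if k < a then a - 1 - k else k)) (a + 1) n ↔
            Flag G v (a + 1) n := by
          constructor
          · rintro ⟨x, y, p1, p2, p3, p4⟩
            simp only [if_neg (show ¬ x < a by omega), if_neg (show ¬ y < a by omega)] at p4
            exact ⟨x, y, p1, p2, p3, p4⟩
          · rintro ⟨x, y, p1, p2, p3, p4⟩
            refine ⟨x, y, p1, p2, p3, ?_⟩
            simp only [if_neg (show ¬ x < a by omega), if_neg (show ¬ y < a by omega)]
            exact p4
        rw [e1, e2]
        exact hF
  by_cases hba' : b + 1 = a
  · have h' := h.flip (a := a) (by omega) (by omega) h0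
    refine ham_close hcubic h' hn ?_
    simp only [if_pos (show 0 < a by omega), if_neg (show ¬ n - 1 < a by omega)]
    rw [show a - 1 - 0 = b by omega]
    exact h1.symm
  by_cases F23 : Flag G v 0 b ↔ Flag G v (a + 1) n
  · exact theta_pair hcubic h hb1 (by omega) han h0 h1 F23
  by_cases F13 : Flag G v (b + 1) a ↔ Flag G v (a + 1) n
  · exact flip h hb1 hba han h0 h1 F13
  have F12 : Flag G v (b + 1) a ↔ Flag G v 0 b := by tauto
  have frev : ∀ p q, q ≤ n → (Flag G (fun k => v (n - 1 - k)) p q ↔ Flag G v (n - q) (n - p)) := by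
    intro p q hq
    constructor
    · rintro ⟨x, y, p1, p2, p3, p4⟩
      exact ⟨n - 1 - y, n - 1 - x, by omega, by omega, by omega, p4.symm⟩
    · rintro ⟨x, y, p1, p2, p3, p4⟩
      refine ⟨n - 1 - y, n - 1 - x, by omega, by omega, by omega, ?_⟩
      simp only
      rw [show n - 1 - (n - 1 - x) = x by omega, show n - 1 - (n - 1 - y) = y by omega]
      exact p4.symm
  refine flip (a := n - 1 - b) (b := n - 1 - a) h.rev (by omega) (by omega) (by omega) ?_ ?_ ?_
  · rw [show n - 1 - (n - 1 - b) = b by omega]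
    exact h1
  · rw [show n - 1 - (n - 1 - a) = a by omega, show n - 1 - (n - 1) = 0 by omega]
    exact h0
  · rw [frev _ _ (by omega), frev _ _ (by omega)]
    rw [show n - (n - 1 - b) = b + 1 by omega, show n - (n - 1 - a + 1) = a by omega,
      show n - n = 0 by omega, show n - (n - 1 - b + 1) = b by omega]
    exact F12

end
end HO

namespace HO

/-- a closed cycle part on the right of a dumbbell -/
structure CP (n a b : ℕ) (μ : ℕ → ℕ) (c1 c2 : ℕ) : Prop where
  ac : a < c1
  cc : c1 < c2
  cn : c2 < n
  alt : (b < c1 ∧ μ c1 = c2 ∧ μ c2 = c1) ∨ (b = c1 ∧ c2 + 1 = n)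
  no : ∀ k, c1 ≤ k → k ≤ c2 → c1 ≤ μ k → μ k ≤ c2 → μ k = k ∨ (b < c1 ∧ (k = c1 ∨ k = c2))

section
variable {V : Type*} {G : SimpleGraph V}

lemma cp_exists {n a b : ℕ} {v : ℕ → V} {μ : ℕ → ℕ} (h : HP G n a b v μ) (hab : a < b) :
    ∃ c1 c2, CP n a b μ c1 c2 := by
  have hn := h.hn
  have hb := h.hb
  by_cases hc : ∃ x y, b + 1 ≤ x ∧ x < y ∧ y ≤ n - 1 ∧ μ x = y
  · obtain ⟨c1, c2, h1, h2, h3, h4, h5, h6⟩ :=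
      min_chord μ (b + 1) (n - 1) (fun i hi => h.inv i (by omega)) hc
    exact ⟨c1, c2, by omega, h2, by omega, Or.inl ⟨by omega, h4, h5⟩, fun k k1 k2 k3 k4 =>
      (h6 k k1 k2 k3 k4).imp id (fun e => ⟨by omega, e⟩)⟩
  · refine ⟨b, n - 1, hab, by omega, by omega, Or.inr ⟨rfl, by omega⟩, ?_⟩
    intro k k1 k2 k3 k4
    left
    have fb := h.fb (by omega)
    have hi := h.inv k (by omega)
    by_contra hne
    have g : k ≠ b := by rintro rfl; omega
    have g' : μ k ≠ b := by intro e; rw [e] at hi; omega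
    rcases Nat.lt_or_ge k (μ k) with h1 | h1
    · exact hc ⟨k, μ k, by omega, h1, by omega, rfl⟩
    · exact hc ⟨μ k, k, by omega, by omega, by omega, hi⟩

lemma db_good {n a b : ℕ} {v : ℕ → V} {μ : ℕ → ℕ} (h : HP G n a b v μ) (hab : a < b)
    {c1 c2 : ℕ} (hC : CP n a b μ c1 c2) (P : ℕ → Prop) (r s1 : ℕ) (hP : ∀ k, P k → k ≤ a)
    (hPa : P a → a + 1 < c1)
    (hs1 : P s1) (hs1' : P a ∨ s1 < a) (hPC : ∀ k, P k → ¬ (c1 ≤ μ k ∧ μ k ≤ c2))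
    (hcyc : ∀ k, P k → Cyc n a b μ P k) (hr : r < c1) (hrP : ¬ P r)
    (hcon : ∀ k, k ≤ a → ¬ P k → Con n a b μ (fun k => P k ∨ (c1 ≤ k ∧ k ≤ c2)) k r)
    (hcon' : a + 1 < c1 → Con n a b μ (fun k => P k ∨ (c1 ≤ k ∧ k ≤ c2)) (a + 1) r) :
    Good G := by
  have hn := h.hn
  have hb := h.hb
  obtain ⟨ac, cc, cn, alt, no⟩ := hC
  have nP : ∀ k, a < k → ¬ P k := fun k hk hp => by have := hP k hp; omega
  have s1a := hP s1 hs1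
  refine good_of h (fun k => P k ∨ (c1 ≤ k ∧ k ≤ c2)) (rk n s1 c1) r (by omega) ?_ ?_ ?_
    (rank_db _ (by omega) (by omega) (Or.inl hs1) (Or.inr (by omega)) ?_ ?_)
  · rintro (h | h)
    · exact hrP h
    · omega
  · rintro k hk (hS | hS)
    · have ka := hP k hS
      have hSl : ∀ l, (P l ∨ (c1 ≤ l ∧ l ≤ c2)) → H n a b k l → P l := by
        rintro l (hl | hl) hH
        · exact hl
        · by_cases hka : k = a
          · subst hka
            have := hPa hS
            unfold H at hH; omega
          · unfold H at hH; omega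
      rcases hcyc k hS with ⟨j, l, q1, q2, q3, q4, q5, q6, q7, q8, q9⟩ |
        ⟨j, q1, q2, q3, q4, q5, q6⟩
      · refine Or.inl ⟨j, l, q1, q2, q3, Or.inl q4, Or.inl q5, q6, q7, ?_, ?_⟩
        · intro t ht hS' hH
          exact q8 t ht (hSl t hS' hH) hH
        · rintro (hh | hh)
          · exact q9 hh
          · exact absurd hh (hPC k hS)
      · refine Or.inr ⟨j, q1, Or.inl q2, q3, ?_, Or.inl q5, q6⟩
        intro t ht hS' hH
        exact q4 t ht (hSl t hS' hH) hH
    · have nPm : ¬ P (μ k) := by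
        intro hp
        have := hPC _ hp
        rw [h.inv k hk] at this
        exact this hS
      have nP0 : k = a → ¬ P 0 := by omega
      have nPa : k = 0 → ¬ P a := by omega
      have z1 := nP (k + 1) (by omega)
      have z2 := nP (n - 1) (by omega)
      have z3 := nP b (by omega)
      have z4 := nP (k - 1)
      have no' := no k hS.1 hS.2
      by_cases hend : k = c1 ∨ k = c2
      · rcases alt with ⟨t1, t2, t3⟩ | ⟨t1, t2⟩
        · have hmk : c1 ≤ μ k ∧ μ k ≤ c2 ∧ μ k ≠ k := by
            rcases hend with rfl | rfl <;> omega
          rcases hend with rfl | rfl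
          · refine cyc_l (by omega) (Or.inr ?_) (Or.inr (by omega)) (by omega) (by omega)
              (by omega) (Or.inr (by omega)) hmk.2.2
            rintro (hh | hh)
            · have := hP _ hh
              omega
            · omega
          · refine cyc_r (by omega) (by omega) (Or.inr (by omega)) (Or.inr ?_) ?_ (by omega)
              (by omega) (Or.inr (by omega)) hmk.2.2
            · rintro (hh | hh)
              · exact z1 hh
              · omega
            · rintro - (hh | hh)
              · exact z3 hh
              · omega
        · have hm : (P (μ k) ∨ (c1 ≤ μ k ∧ μ k ≤ c2)) → μ k = k := by
            rintro (hh | hh)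
            · exact absurd hh nPm
            · have := no' hh.1 hh.2
              omega
          rcases hend with rfl | rfl
          · refine Or.inl ⟨k + 1, c2, by omega, by omega, by omega, Or.inr (by omega),
              Or.inr (by omega), by unfold H; omega, by unfold H; omega, ?_, hm⟩
            rintro l hl (hh | hh) hH
            · have := hP l hh
              have hla := fun e : l = a => hPa (e ▸ hh)
              unfold H at hH; omega
            · unfold H at hH; omega
          · refine Or.inl ⟨k - 1, b, by omega, by omega, by omega, Or.inr (by omega),
              Or.inr (by omega), by unfold H; omega, by unfold H; omega, ?_, hm⟩
            rintro l hl (hh | hh) hH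
            · have := hP l hh
              have hla := fun e : l = a => hPa (e ▸ hh)
              unfold H at hH; omega
            · unfold H at hH; omega
      · refine cyc_mid (by omega) (by omega) (Or.inr (by omega)) (Or.inr (by omega)) (by omega)
          (by omega) ?_
        rintro (hh | hh)
        · exact absurd hh nPm
        · have := no' hh.1 hh.2
          omega
  · intro k hk hS
    push Not at hS
    obtain ⟨hS, hS2⟩ := hS
    by_cases ka : k ≤ a
    · exact hcon k ka hS
    · have nS : ∀ l, a < l → ¬ (c1 ≤ l ∧ l ≤ c2) → ¬ (P l ∨ (c1 ≤ l ∧ l ≤ c2)) := by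
        rintro l hl hl' (hh | hh)
        · exact nP l hl hh
        · exact hl' hh
      by_cases kc : k < c1
      · refine (Con.seg k (a + 1) hk (by omega) ?_).trans (hcon' (by omega))
        intro l hl
        exact nS l (by omega) (by omega)
      · have := hS2 (by omega)
        refine (Con.seg k (n - 1) hk (by omega) ?_).trans ?_
        · intro l hl
          exact nS l (by omega) (by omega)
        · refine (Con.edgeH (j := b) (by omega) (by omega) (nS _ (by omega) (by omega))
            (nS _ (by omega) (by omega)) (by unfold H; omega)).trans ?_
          refine (Con.seg b (a + 1) (by omega) (by omega) ?_).trans (hcon' (by omega))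
          intro l hl
          exact nS l (by omega) (by omega)
  · rcases hs1' with hh | hh
    · exact Or.inl (Or.inl hh)
    · exact Or.inr (by omega)
  · omega

/-- a chord inside an interval of `[0,a)` without neighbours in the right cycle -/
lemma sab {n a b : ℕ} {v : ℕ → V} {μ : ℕ → ℕ} (h : HP G n a b v μ) (hab : a < b)
    {c1 c2 : ℕ} (hC : CP n a b μ c1 c2) (p q : ℕ) (hq : q < a)
    (hN : ∀ k, p ≤ k → k ≤ q → ¬ (c1 ≤ μ k ∧ μ k ≤ c2))
    (x y : ℕ) (hx : p ≤ x) (hxy : x < y) (hy : y ≤ q) (hm : μ x = y) : Good G := by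
  have hn := h.hn
  have hb := h.hb
  obtain ⟨d1, d2, h1, h2, h3, h4, h5, h6⟩ :=
      min_chord μ p q (fun i hi => h.inv i (by omega)) ⟨x, y, hx, hxy, hy, hm⟩
  have ac := hC.ac
  have cc := hC.cc
  have cn := hC.cn
  refine db_good h hab hC (fun k => d1 ≤ k ∧ k ≤ d2) a d1 (by omega) (by omega) (by omega) (by omega)
    (fun k hk => hN k (by omega) (by omega)) ?_ (by omega) (by omega) ?_ ?_
  · intro k hk
    have := h6 k hk.1 hk.2
    by_cases e1 : k = d1
    · subst e1
      apply cyc_l <;> omega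
    · by_cases e2 : k = d2
      · subst e2
        apply cyc_r <;> omega
      · apply cyc_mid <;> omega
  · intro k ka hk
    by_cases k1 : k < d1
    · refine (Con.seg k 0 (by omega) (by omega) (by intro l; omega)).trans ?_
      exact Con.edgeH (by omega) (by omega) (by omega) (by omega) (by unfold H; omega)
    · exact Con.seg _ _ (by omega) (by omega) (by intro l; omega)
  · intro ha1
    exact Con.seg _ _ (by omega) (by omega) (by intro l; omega)

lemma db_cross {n a b : ℕ} {v : ℕ → V} {μ : ℕ → ℕ} (h : HP G n a b v μ) (hab : a < b)
    {c1 c2 : ℕ} (hC : CP n a b μ c1 c2) (u1 u2 : ℕ) (hu : u1 < u2) (hua : u2 < a)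
    (hu1 : c1 ≤ μ u1 ∧ μ u1 ≤ c2) (hu2 : c1 ≤ μ u2 ∧ μ u2 ≤ c2)
    (hN : ∀ k, u1 < k → k < u2 → ¬ (c1 ≤ μ k ∧ μ k ≤ c2)) : Good G := by
  have hn := h.hn
  have hb := h.hb
  by_cases hch : ∃ x y, u1 + 1 ≤ x ∧ x < y ∧ y ≤ u2 - 1 ∧ μ x = y
  · obtain ⟨x, y, h1, h2, h3, h4⟩ := hch
    exact sab h hab hC (u1 + 1) (u2 - 1) (by omega) (fun k k1 k2 => hN k (by omega) (by omega))
      x y h1 h2 h3 h4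
  obtain ⟨ac, cc, cn, alt, no⟩ := hC
  have i1 := h.inv u1 (by omega)
  have i2 := h.inv u2 (by omega)
  have fb := h.fb (by omega)
  have nb1 : μ u1 ≠ b := by intro e; rw [e] at i1; omega
  have nb2 : μ u2 ≠ b := by intro e; rw [e] at i2; omega
  obtain ⟨w1, e1⟩ : ∃ w, μ u1 = w := ⟨_, rfl⟩
  obtain ⟨w2, e2⟩ : ∃ w, μ u2 = w := ⟨_, rfl⟩
  rw [e1] at hu1 i1 nb1
  rw [e2] at hu2 i2 nb2
  have hne : w1 ≠ w2 := by rintro rfl; omega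
  have bw : b < min w1 w2 := by omega
  refine two_iv h u1 u2 (min w1 w2) (max w1 w2) hu (by omega) (by omega) hua (by omega)
    (by omega) bw (fun k => (u1 ≤ k ∧ k ≤ u2) ∨ (min w1 w2 ≤ k ∧ k ≤ max w1 w2))
    (fun k => Iff.rfl) ?_ ?_
  · intro k hk
    have : k = u1 ∨ k = u2 ∨ k = w1 ∨ k = w2 := by omega
    clear hk alt no hN hch
    rcases this with rfl | rfl | rfl | rfl <;> constructor <;> omega
  · intro k hk hS hS'
    suffices hh : k = u1 ∨ k = u2 ∨ k = w1 ∨ k = w2 by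
      clear no hN hch alt hS hS'
      omega
    by_contra hcon
    push Not at hcon
    have hi := h.inv k hk
    have g1 : μ k ≠ u1 := by intro e; rw [e] at hi; omega
    have g2 : μ k ≠ u2 := by intro e; rw [e] at hi; omega
    have g3 : μ k ≠ w1 := by intro e; rw [e] at hi; omega
    have g4 : μ k ≠ w2 := by intro e; rw [e] at hi; omega
    rcases hS with hS | hS
    · have hne := h.ne k hk (by omega) (by omega)
      rcases hS' with hS' | hS'
      · rcases Nat.lt_or_ge k (μ k) with h1 | h1
        · exact hch ⟨k, μ k, by omega, h1, by omega, rfl⟩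
        · exact hch ⟨μ k, k, by omega, by omega, by omega, hi⟩
      · exact hN k (by omega) (by omega) (by omega)
    · have hne := h.ne k hk (by omega) (by omega)
      rcases hS' with hS' | hS'
      · exact hN (μ k) (by omega) (by omega) (by omega)
      · have := no k (by omega) (by omega) (by omega) (by omega)
        have e : k = c1 ∨ k = c2 := by omega
        clear no hN hch alt
        omega

end
end HO

namespace HO

section
variable {V : Type*} {G : SimpleGraph V}

lemma db_alpha {n a b : ℕ} {v : ℕ → V} {μ : ℕ → ℕ} (h : HP G n a b v μ) (hab : a < b)
    {c1 c2 : ℕ} (hC : CP n a b μ c1 c2) (u : ℕ) (hua : u < a)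
    (hN : ∀ k, k < a → k ≠ u → ¬ (c1 ≤ μ k ∧ μ k ≤ c2))
    (hch : ∀ i, i < μ i → μ i < a → i < u ∧ u < μ i)
    (i0 p : ℕ) (hip : i0 < p) (hpj : p < μ i0) (hja : μ i0 < a) (hpu : p ≠ u) (hmp : a < μ p) :
    Good G := by
  classical
  have hn := h.hn
  have hb := h.hb
  have hex : ∃ i, i < p ∧ p < μ i ∧ μ i < a := ⟨i0, hip, hpj, hja⟩
  obtain ⟨x1, x2, x3⟩ := Nat.find_spec hex
  have hmin := fun d (hd : d < Nat.find hex) => Nat.find_min hex hd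
  generalize Nat.find hex = i at x1 x2 x3 hmin
  obtain ⟨hiu, huj⟩ := hch i (by omega) x3
  have hinvi := h.inv i (by omega)
  obtain ⟨j, hj⟩ : ∃ j, μ i = j := ⟨_, rfl⟩
  rw [hj] at x2 x3 huj hinvi
  have hmpn := h.lt p (by omega)
  have hmpC := hN p (by omega) hpu
  have fa := h.fa (by omega)
  have fb := h.fb (by omega)
  have hinvp := h.inv p (by omega)
  have ac := hC.ac
  have cc := hC.cc
  have cn := hC.cn
  have alt : μ p < c1 ∨ b < c1 := by
    have := hC.alt
    omega
  have nij := h.notH i (by omega)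
  rw [hj] at nij
  unfold H at nij
  refine db_good h hab hC (fun k => k ≤ i ∨ (j ≤ k ∧ k ≤ a)) (a + 1) a (by omega) (by omega)
    (by omega) (by omega) ?_ ?_ (by omega) (by omega) ?_ ?_
  · intro k hk
    by_cases hka : k = a
    · subst hka; omega
    · exact hN k (by omega) (by omega)
  · intro k hk
    by_cases hki : k = i
    · subst hki
      clear hC hmin hch hN
      by_cases k0 : k = 0
      · refine Or.inr ⟨a, ?_, ?_, ?_, ?_, ?_, ?_⟩ <;> (try unfold H) <;> omega
      · apply cyc_r <;> omega
    · by_cases hkj : k = j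
      · subst hkj
        clear hC hmin hch hN
        apply cyc_l <;> omega
      · have hm : (μ k ≤ i ∨ (j ≤ μ k ∧ μ k ≤ a)) → μ k = k := by
          intro hS'
          by_contra hne
          have hi := h.inv k (by omega)
          have g1 : μ k ≠ i := by intro e; rw [e] at hi; omega
          have g2 : μ k ≠ j := by intro e; rw [e] at hi; omega
          have g3 : μ k ≠ a := by intro e; rw [e] at hi; omega
          have g4 : k ≠ a := by rintro rfl; omega
          have hc1 := hch k
          have hc2 := hch (μ k)
          rw [hi] at hc2
          have hm1 := hmin k
          have hm2 := hmin (μ k)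
          rw [hi] at hm2
          omega
        clear hC hmin hch hN
        by_cases k0 : k = 0
        · subst k0
          refine Or.inl ⟨1, a, ?_, ?_, ?_, ?_, ?_, ?_, ?_, ?_, hm⟩ <;> clear hm <;>
            (try unfold H) <;> omega
        · by_cases ka : k = a
          · subst ka
            refine Or.inl ⟨0, k - 1, ?_, ?_, ?_, ?_, ?_, ?_, ?_, ?_, hm⟩ <;> clear hm <;>
              (try unfold H) <;> omega
          · refine cyc_mid ?_ ?_ ?_ ?_ ?_ ?_ hm <;> clear hm <;> omega
  · intro k hka hk
    clear hC hmin hch hN nij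
    refine (Con.seg k p (by omega) (by omega) (by intro l; omega)).trans ?_
    refine (Con.edgeM (j := μ p) (by omega) (by omega) (by omega) (by omega) rfl (by omega)).trans ?_
    by_cases hc : μ p < c1
    · exact Con.seg _ _ (by omega) (by omega) (by intro l; omega)
    · refine (Con.seg _ (n - 1) (by omega) (by omega) (by intro l; omega)).trans ?_
      refine (Con.edgeH (j := b) (by omega) (by omega) (by omega) (by omega)
          (by unfold H; omega)).trans ?_
      exact Con.seg _ _ (by omega) (by omega) (by intro l; omega)
  · intro _
    exact Relation.ReflTransGen.refl

lemma db_square {n a b : ℕ} {v : ℕ → V} {μ : ℕ → ℕ} (h : HP G n a b v μ) (hab : a < b)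
    {c1 c2 : ℕ} (hC : CP n a b μ c1 c2) (p1 q1 p2 q2 z : ℕ) (o1 : p1 < q1) (o2 : q1 < z)
    (o3 : z < p2) (o4 : p2 < q2) (o5 : q2 < a)
    (hz : μ z < p1 ∨ (q2 < μ z ∧ μ z < a))
    (P : ℕ → Prop) (hPdef : ∀ k, P k ↔ (p1 ≤ k ∧ k ≤ q1) ∨ (p2 ≤ k ∧ k ≤ q2))
    (e : ∀ k, k = p1 ∨ k = q1 ∨ k = p2 ∨ k = q2 → P (μ k) ∧ μ k ≠ k)
    (hmu : ∀ k, P k → P (μ k) → k = p1 ∨ k = q1 ∨ k = p2 ∨ k = q2)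
    (hPC : ∀ k, P k → ¬ (c1 ≤ μ k ∧ μ k ≤ c2)) : Good G := by
  have hn := h.hn
  have hb := h.hb
  have ac := hC.ac
  have cc := hC.cc
  have cn := hC.cn
  refine db_good h hab hC P a p1 (by intro k; rw [hPdef]; omega) (by rw [hPdef]; omega)
    (by rw [hPdef]; omega) (by omega) hPC ?_ (by omega) (by rw [hPdef]; omega) ?_ ?_
  · intro k hS
    clear hPC
    by_cases ee : k = p1 ∨ k = q1 ∨ k = p2 ∨ k = q2
    · have e' := e k ee
      clear e hmu
      by_cases e1 : k = p1 ∨ k = p2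
      · refine cyc_l ?_ ?_ ?_ ?_ ?_ ?_ e'.1 e'.2 <;> clear e' <;> (try simp only [hPdef]) <;> omega
      · refine cyc_r ?_ ?_ ?_ ?_ ?_ ?_ ?_ e'.1 e'.2 <;> clear e' <;> (try simp only [hPdef]) <;>
          omega
    · have hm : P (μ k) → μ k = k := fun hs => absurd (hmu k hS hs) ee
      rw [hPdef] at hS
      clear e hmu
      refine cyc_mid ?_ ?_ ?_ ?_ ?_ ?_ hm <;> clear hm <;> (try simp only [hPdef]) <;> omega
  · intro k hka hS
    clear hPC e hmu
    rw [hPdef] at hS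
    have c0 : ∀ k, k < p1 → Con n a b μ (fun k => P k ∨ (c1 ≤ k ∧ k ≤ c2)) k a := by
      intro k k1
      refine (Con.seg k 0 (by omega) (by omega) (by intro k; rw [hPdef]; omega)).trans ?_
      exact Con.edgeH (by omega) (by omega) (by rw [hPdef]; omega) (by rw [hPdef]; omega)
        (by unfold H; omega)
    have c3 : ∀ k, q2 < k → k ≤ a → Con n a b μ (fun k => P k ∨ (c1 ≤ k ∧ k ≤ c2)) k a := by
      intro k k1 k2
      exact Con.seg k a (by omega) (by omega) (by intro k; rw [hPdef]; omega)
    by_cases k1 : k < p1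
    · exact c0 k k1
    · by_cases k2 : q2 < k
      · exact c3 k k2 hka
      · refine (Con.seg k z (by omega) (by omega) (by intro k; rw [hPdef]; omega)).trans ?_
        refine (Con.edgeM (j := μ z) (by omega) (by omega) (by rw [hPdef]; omega)
          (by rw [hPdef]; omega) rfl (by omega)).trans ?_
        rcases hz with hz | hz
        · exact c0 _ hz
        · exact c3 _ hz.1 (by omega)
  · intro ha1
    exact Con.seg _ _ (by omega) (by omega) (by intro l; rw [hPdef]; omega)

end

/-- Hamiltonian path (as a list) of the vertices satisfying `X`, from `u` to `e` -/
def LP (R : ℕ → ℕ → Prop) (u m : ℕ) (X : ℕ → Prop) (e : ℕ) : Prop :=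
  ∃ l : List ℕ, l.length = m ∧ l.Nodup ∧ (∀ x, x ∈ l ↔ X x) ∧ l.IsChain R ∧
    l.head? = some u ∧ l.getLast? = some e

lemma LP.ext {R : ℕ → ℕ → Prop} {u m : ℕ} {X : ℕ → Prop} {e : ℕ} (h : LP R u m X e) (t : ℕ)
    (ht : ¬ X t) (hR : R e t) : LP R u (m + 1) (fun x => X x ∨ x = t) t := by
  obtain ⟨l, h1, h2, h3, h4, h5, h6⟩ := h
  refine ⟨l ++ [t], by simp [h1], ?_, ?_, ?_, ?_, ?_⟩
  · rw [List.nodup_append]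
    refine ⟨h2, by simp, ?_⟩
    intro x hx y hy
    simp only [List.mem_singleton] at hy
    rintro rfl
    subst hy
    exact ht ((h3 _).1 hx)
  · intro x
    simp [h3]
  · rw [List.isChain_append]
    refine ⟨h4, by simp, ?_⟩
    intro x hx y hy
    rw [h6] at hx
    simp at hx hy
    subst hx hy
    exact hR
  · simp [h5]
  · simp

lemma LP.congr {R : ℕ → ℕ → Prop} {u m m' : ℕ} {X X' : ℕ → Prop} {e : ℕ} (h : LP R u m X e)
    (hm : m = m') (hX : ∀ x, X x ↔ X' x) : LP R u m' X' e := by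
  obtain ⟨l, h1, h2, h3, h4⟩ := h
  exact ⟨l, by omega, h2, fun x => (h3 x).trans (hX x), h4⟩

section
variable {V : Type*} {G : SimpleGraph V}

lemma LP.ham {n m u : ℕ} {v : ℕ → V} (h : Ham G n v) (hmn : m < n)
    (hl : LP (fun i j => G.Adj (v i) (v j)) u (m + 1) (fun x => x ≤ m) m) :
    ∃ v', Ham G n v' ∧ v' 0 = v u ∧ ∀ i, m < i → v' i = v i := by
  obtain ⟨l, h1, h2, h3, h4, h5, h6⟩ := hl
  have hg : ∀ i (hi : i < m + 1), l.getD i 0 = l[i]'(by omega) := by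
    intro i hi
    exact List.getD_eq_getElem _ _ _
  have hlast : l.getD m 0 = m := by
    rw [List.getLast?_eq_getElem?, h1] at h6
    simp at h6
    rw [List.getD_eq_getElem?_getD, h6]; rfl
  have hle : ∀ i, i < m + 1 → l.getD i 0 ≤ m := by
    intro i hi
    rw [hg i hi]
    exact (h3 _).1 (List.getElem_mem _)
  refine ⟨fun i => v (if i ≤ m then l.getD i 0 else i), ⟨?_, ?_, ?_⟩, ?_, ?_⟩
  · intro i j hi hj e
    by_cases him : i ≤ m
    · have li := hle i (by omega)
      by_cases hjm : j ≤ m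
      · have lj := hle j (by omega)
        simp only [if_pos him, if_pos hjm] at e
        have := h.inj _ _ (by omega) (by omega) e
        rw [hg i (by omega), hg j (by omega)] at this
        exact (h2.getElem_inj_iff).1 this
      · simp only [if_pos him, if_neg hjm] at e
        have := h.inj _ _ (by omega) (by omega) e
        omega
    · by_cases hjm : j ≤ m
      · have lj := hle j (by omega)
        simp only [if_neg him, if_pos hjm] at e
        have := h.inj _ _ (by omega) (by omega) e
        omega
      · simp only [if_neg him, if_neg hjm] at e
        exact h.inj _ _ (by omega) (by omega) e
  · intro x
    obtain ⟨i, hi, rfl⟩ := h.surj x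
    by_cases him : i ≤ m
    · obtain ⟨k, hk, e⟩ := List.getElem_of_mem ((h3 i).2 him)
      refine ⟨k, by omega, ?_⟩
      simp only [if_pos (show k ≤ m by omega)]
      rw [hg k (by omega), e]
    · exact ⟨i, hi, by simp only [if_neg him]⟩
  · intro i hi
    by_cases h7 : i + 1 ≤ m
    · simp only [if_pos h7, if_pos (show i ≤ m by omega)]
      rw [hg i (by omega), hg (i + 1) (by omega)]
      rw [List.isChain_iff_getElem] at h4
      exact h4 i (by omega)
    · by_cases h8 : i = m
      · subst h8
        simp only [if_neg h7, if_pos (le_refl i)]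
        rw [hlast]
        exact h.step i hi
      · simp only [if_neg h7, if_neg (show ¬ i ≤ m by omega)]
        exact h.step i hi
  · simp only [Nat.zero_le, if_true]
    rw [List.head?_eq_getElem?] at h5
    rw [List.getD_eq_getElem?_getD, h5]; rfl
  · intro i hi
    simp only [if_neg (show ¬ i ≤ m by omega)]

end
end HO

namespace HO

section
variable {V : Type*} [Fintype V] [DecidableEq V] {G : SimpleGraph V} [DecidableRel G.Adj]

lemma db_ind {n a b : ℕ} {v : ℕ → V} {μ : ℕ → ℕ} (hcubic : ∀ v : V, G.degree v = 3)
    (h : HP G n a b v μ) (hab : a < b)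
    {c1 c2 : ℕ} (hC : CP n a b μ c1 c2) (u : ℕ) (hua : u < a) (hu : c1 ≤ μ u)
    (hN : ∀ k, k < a → k ≠ u → ¬ (c1 ≤ μ k ∧ μ k ≤ c2))
    (hlow : ∀ x, x < u → μ x < a → u < μ x)
    (hhigh : ∀ x, u < x → x < a → μ x < a → μ x < u)
    (hY : ∀ i p, i < p → p < μ i → μ i < a → p ≠ u → μ p < a)
    (h0 : μ 0 < a) (h0u : u ≠ 0)
    (d : ℕ) : ∀ k, k + d = u → u + k < a →
      (∀ x, u - k ≤ x → x ≤ u + k → x ≠ u → u - k ≤ μ x ∧ μ x ≤ u + k) →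
      LP (fun i j => G.Adj (v i) (v j)) u (2 * k + 1) (fun x => u - k ≤ x ∧ x ≤ u + k) (u - k) →
      LP (fun i j => G.Adj (v i) (v j)) u (2 * k + 1) (fun x => u - k ≤ x ∧ x ≤ u + k) (u + k) →
      Good G := by
  have hn := h.hn
  have hb := h.hb
  have ac := hC.ac
  have cc := hC.cc
  have cn := hC.cn
  have fb := h.fb (by omega)
  have hAs : ∀ i j, i < n → j < n → i + 1 = j → G.Adj (v i) (v j) ∧ G.Adj (v j) (v i) := by
    intro i j hi hj e
    have := (h.adj i j hi hj).2 (Or.inl (by unfold H; omega))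
    exact ⟨this, this.symm⟩
  have hAm : ∀ i j, i < n → j < n → μ i = j → i ≠ j → G.Adj (v i) (v j) ∧ G.Adj (v j) (v i) := by
    intro i j hi hj e ne
    have := (h.adj i j hi hj).2 (Or.inr ⟨e, ne⟩)
    exact ⟨this, this.symm⟩
  induction d using Nat.strong_induction_on with
  | _ d ih =>
  intro k hk hka hcl hPy hPz
  by_cases hd : d = 0
  · subst hd
    obtain rfl : k = u := by omega
    obtain ⟨v', H1, H2, H3⟩ := LP.ham (m := 2 * k) h.ham (by omega)
      (by
        have e : k + k = 2 * k := by omega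
        rw [e] at hPz
        exact hPz.congr rfl (by intro x; omega))
    have hmn := h.lt k (by omega)
    have hadj : G.Adj (v' 0) (v' (μ k)) := by
      rw [H2, H3 _ (by omega)]
      exact (hAm k (μ k) (by omega) hmn rfl (by omega)).1
    by_cases hl : μ k = n - 1
    · rw [hl] at hadj
      exact ham_close hcubic H1 hn hadj
    · have hbm : b ≠ μ k := by
        intro e
        have := h.inv k (by omega)
        rw [← e] at this
        omega
      have hbc : b ≤ c1 := by have := hC.alt; omega
      refine theta_good hcubic H1 hn (b := b) (a := μ k) (by omega) (by omega) (by omega) hadj ?_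
      rw [H3 _ (by omega), H3 _ (by omega)]
      exact (h.adj _ _ (by omega) (by omega)).2 (Or.inl (by unfold H; omega))
  · obtain ⟨y, hy⟩ : ∃ y, y + 1 = u - k := ⟨u - k - 1, by omega⟩
    obtain ⟨z, hz⟩ : ∃ z, z = u + k + 1 := ⟨_, rfl⟩
    have hl0 := hlow 0 (by omega) h0
    have hmy : μ y < a := by
      by_cases y0 : y = 0
      · rw [y0]; exact h0
      · exact hY 0 y (by omega) (by omega) h0 (by omega)
    have hmyu := hlow y (by omega) hmy
    have iy := h.inv y (by omega)
    have hmyz : z ≤ μ y := by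
      by_contra hlt
      have := hcl (μ y) (by omega) (by omega) (by omega)
      omega
    have hPy' := hPy
    have hPz' := hPz
    rw [show u - k = y + 1 by omega] at hPy' hPz'
    by_cases hyz : μ y = z
    · have iz : μ z = y := by rw [← hyz]; exact iy
      have A1 := hAs y (y + 1) (by omega) (by omega) rfl
      have A2 := hAs (u + k) z (by omega) (by omega) (by omega)
      have A3 := hAm y z (by omega) (by omega) hyz (by omega)
      refine ih (d - 1) (by omega) (k + 1) (by omega) (by omega) ?_ ?_ ?_
      · intro x x1 x2 xu
        by_cases e1 : x = y
        · subst e1; omega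
        · by_cases e2 : x = z
          · subst e2; omega
          · have := hcl x (by omega) (by omega) xu
            omega
      · rw [show u - (k + 1) = y by omega]
        exact ((hPz'.ext z (by omega) A2.1).ext y (by omega) A3.2).congr (by omega)
          (by intro x; omega)
      · rw [show u + (k + 1) = z by omega, show u - (k + 1) = y by omega]
        exact ((hPy'.ext y (by omega) A1.2).ext z (by omega) A3.1).congr (by omega)
          (by intro x; omega)
    · have hmz : μ z < a := hY y z (by omega) (by omega) hmy (by omega)
      have hmzu := hhigh z (by omega) (by omega) hmz
      have iz := h.inv z (by omega)
      have hmzy : μ z < y := by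
        by_contra hlt
        by_cases e : μ z = y
        · rw [e] at iz; omega
        · have := hcl (μ z) (by omega) (by omega) (by omega)
          omega
      obtain ⟨w, hw⟩ : ∃ w, w + 1 = y := ⟨y - 1, by omega⟩
      have hmw : μ w < a := by
        by_cases e : μ z = w
        · rw [← e, iz]; omega
        · exact hY (μ z) w (by omega) (by omega) (by omega) (by omega)
      have hmwu := hlow w (by omega) hmw
      have iw := h.inv w (by omega)
      have hmwz : z ≤ μ w := by
        by_contra hlt
        have := hcl (μ w) (by omega) (by omega) (by omega)
        omega
      have hne : μ w ≠ μ y := by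
        intro e
        rw [e, iy] at iw; omega
      by_cases hwz : μ w = z
      · have hzw : μ z = w := by rw [← hwz]; exact iw
        obtain ⟨t, ht⟩ : ∃ t, t = z + 1 := ⟨_, rfl⟩
        by_cases hty : μ y = t
        · have hty' : μ t = y := by rw [← hty]; exact iy
          have A1 := hAs y (y + 1) (by omega) (by omega) rfl
          have A2 := hAs (u + k) z (by omega) (by omega) (by omega)
          have A3 := hAm y t (by omega) (by omega) hty (by omega)
          have A4 := hAm w z (by omega) (by omega) hwz (by omega)
          have A5 := hAs w y (by omega) (by omega) hw
          have A6 := hAs z t (by omega) (by omega) ht.symm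
          refine ih (d - 2) (by omega) (k + 2) (by omega) (by omega) ?_ ?_ ?_
          · intro x x1 x2 xu
            by_cases e1 : x = y
            · subst e1; omega
            · by_cases e2 : x = z
              · subst e2; omega
              · by_cases e3 : x = w
                · subst e3; omega
                · by_cases e4 : x = t
                  · subst e4; omega
                  · have := hcl x (by omega) (by omega) xu
                    omega
          · rw [show u - (k + 2) = w by omega]
            exact ((((hPz'.ext z (by omega) A2.1).ext t (by omega) A6.1).ext y (by omega)
              A3.2).ext w (by omega) A5.2).congr (by omega) (by intro x; omega)
          · rw [show u + (k + 2) = t by omega, show u - (k + 2) = w by omega]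
            exact ((((hPy'.ext y (by omega) A1.2).ext w (by omega) A5.2).ext z (by omega)
              A4.1).ext t (by omega) A6.1).congr (by omega) (by intro x; omega)
        · have hmt : μ t < a := hY y t (by omega) (by omega) hmy (by omega)
          have hmtu := hhigh t (by omega) (by omega) hmt
          have it := h.inv t (by omega)
          have hmtw : μ t < w := by
            by_contra hlt
            by_cases e : μ t = y
            · rw [e] at it; omega
            · by_cases e : μ t = w
              · rw [e] at it; omega
              · have := hcl (μ t) (by omega) (by omega) (by omega)
                omega
          refine db_square h hab hC (μ t) w z t y hmtw (by omega) (by omega) (by omega) (by omega)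
            (by omega) (fun x => (μ t ≤ x ∧ x ≤ w) ∨ (z ≤ x ∧ x ≤ t)) (by intro x; rfl) ?_ ?_ ?_
          · rintro x (e | e | e | e) <;> subst e <;> omega
          · intro x hx hx'
            by_contra hno
            have h1 := h.ne x (by omega) (by omega) (by omega)
            have h2 := hlow x
            have ix := h.inv x (by omega)
            have g1 : μ x ≠ z := by intro e; rw [e] at ix; omega
            have g2 : μ x ≠ t := by intro e; rw [e] at ix; omega
            omega
          · intro x hx
            exact hN x (by omega) (by omega)
      · have hmzw : μ z ≠ w := by
          intro e; rw [e] at iz; omega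
        obtain ⟨p, q, hp, hq, hpq⟩ : ∃ p q, z < p ∧ p < q ∧
            ((p = μ y ∧ q = μ w) ∨ (p = μ w ∧ q = μ y)) := by
          rcases Nat.lt_or_gt_of_ne hne with e | e
          · exact ⟨μ w, μ y, by omega, by omega, Or.inr ⟨rfl, rfl⟩⟩
          · exact ⟨μ y, μ w, by omega, by omega, Or.inl ⟨rfl, rfl⟩⟩
        have hmm : (μ p = y ∧ μ q = w) ∨ (μ p = w ∧ μ q = y) := by
          rcases hpq with ⟨rfl, rfl⟩ | ⟨rfl, rfl⟩
          · exact Or.inl ⟨iy, iw⟩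
          · exact Or.inr ⟨iw, iy⟩
        refine db_square h hab hC w y p q z (by omega) (by omega) (by omega) hq (by omega)
          (by omega) (fun x => (w ≤ x ∧ x ≤ y) ∨ (p ≤ x ∧ x ≤ q)) (by intro x; rfl) ?_ ?_ ?_
        · rintro x (e | e | e | e) <;> subst e <;> omega
        · intro x hx hx'
          by_contra hno
          have h1 := h.ne x (by omega) (by omega) (by omega)
          have h2 := hhigh x
          have ix := h.inv x (by omega)
          have g1 : μ x ≠ w := by intro e; rw [e] at ix; omega
          have g2 : μ x ≠ y := by intro e; rw [e] at ix; omega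
          omega
        · intro x hx
          exact hN x (by omega) (by omega)

lemma dumbbell_good {n a b : ℕ} {v : ℕ → V} {μ : ℕ → ℕ} (hcubic : ∀ v : V, G.degree v = 3)
    (h : HP G n a b v μ) (hab : a < b) (h0 : μ 0 < a) (h00 : μ 0 ≠ 0) : Good G := by
  classical
  have hn := h.hn
  have hb := h.hb
  obtain ⟨c1, c2, hC⟩ := cp_exists h hab
  have ac := hC.ac
  have cc := hC.cc
  have cn := hC.cn
  have fa := h.fa (by omega)
  by_cases hE : ∃ u, u < a ∧ (c1 ≤ μ u ∧ μ u ≤ c2)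
  swap
  · refine sab h hab hC 0 (a - 1) (by omega) (fun k k1 k2 hk => hE ⟨k, by omega, hk⟩) 0 (μ 0)
      (by omega) (by omega) (by omega) rfl
  obtain ⟨hua, hu⟩ := Nat.find_spec hE
  have hmin := fun d (hd : d < Nat.find hE) => Nat.find_min hE hd
  generalize Nat.find hE = u at hua hu hmin
  by_cases hE2 : ∃ w, u < w ∧ w < a ∧ (c1 ≤ μ w ∧ μ w ≤ c2)
  · obtain ⟨huw, hwa, hw⟩ := Nat.find_spec hE2
    have hmin2 := fun d (hd : d < Nat.find hE2) => Nat.find_min hE2 hd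
    generalize Nat.find hE2 = w at huw hwa hw hmin2
    exact db_cross h hab hC u w huw hwa hu hw
      (fun k k1 k2 hk => hmin2 k k2 ⟨k1, by omega, hk⟩)
  have hN : ∀ k, k < a → k ≠ u → ¬ (c1 ≤ μ k ∧ μ k ≤ c2) := by
    intro k k1 k2 hk
    rcases Nat.lt_or_gt_of_ne k2 with e | e
    · exact hmin k e ⟨k1, hk⟩
    · exact hE2 ⟨k, e, k1, hk⟩
  by_contra hG
  have hu0 : u ≠ 0 := by rintro rfl; omega
  have hch : ∀ i, i < μ i → μ i < a → i < u ∧ u < μ i := by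
    intro i i1 i2
    have ii := h.inv i (by omega)
    have g1 : i ≠ u := by rintro rfl; omega
    have g2 : μ i ≠ u := by intro e; rw [e] at ii; omega
    by_contra hcon
    apply hG
    by_cases e : i < u
    · exact sab h hab hC 0 (u - 1) (by omega) (fun k k1 k2 => hN k (by omega) (by omega)) i (μ i)
        (by omega) i1 (by omega) rfl
    · exact sab h hab hC (u + 1) (a - 1) (by omega) (fun k k1 k2 => hN k (by omega) (by omega))
        i (μ i) (by omega) i1 (by omega) rfl
  have hY : ∀ i p, i < p → p < μ i → μ i < a → p ≠ u → μ p < a := by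
    intro i p p1 p2 p3 p4
    by_contra hcon
    have ip := h.inv p (by omega)
    have g : μ p ≠ a := by intro e; rw [e] at ip; omega
    exact hG (db_alpha h hab hC u hua hN hch i p p1 p2 p3 p4 (by omega))
  apply hG
  refine db_ind hcubic h hab hC u hua hu.1 hN ?_ ?_ hY h0 hu0 u 0 (by omega) (by omega) ?_ ?_ ?_
  · intro x x1 x2
    have ix := h.inv x (by omega)
    have h1 := h.ne x (by omega) (by omega) (by omega)
    have h2 := hch x
    have h3 := hch (μ x)
    rw [ix] at h3
    omega
  · intro x x1 x2 x3
    have ix := h.inv x (by omega)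
    have h1 := h.ne x (by omega) (by omega) (by omega)
    have h2 := hch x
    have h3 := hch (μ x)
    rw [ix] at h3
    omega
  · intro x; omega
  · exact ⟨[u], by simp, by simp, by intro x; simp; omega, by simp, by simp, by simp⟩
  · exact ⟨[u], by simp, by simp, by intro x; simp; omega, by simp, by simp, by simp⟩

lemma ham_good {n : ℕ} {v : ℕ → V} (hcubic : ∀ v : V, G.degree v = 3)
    (h : Ham G n v) (hn : 4 ≤ n) : Good G := by
  by_cases hcl : G.Adj (v 0) (v (n - 1))
  · exact ham_close hcubic h hn hcl
  obtain ⟨a1, a2, h12, h1, h2, A1, A2⟩ : ∃ a1 a2, a1 < a2 ∧ 2 ≤ a1 ∧ a2 + 2 ≤ n ∧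
      G.Adj (v 0) (v a1) ∧ G.Adj (v 0) (v a2) := by
    obtain ⟨p, q, s, hp, hq, hs, hpq, hps, hqs, hA⟩ := h.nbrs hcubic 0
    have e1 := (hA 1 (by omega)).1 (h.step 0 (by omega))
    have e0 : ¬ (0 = p ∨ 0 = q ∨ 0 = s) := fun e =>
      G.loopless.irrefl _ ((hA 0 (by omega)).2 e)
    have el : ¬ (n - 1 = p ∨ n - 1 = q ∨ n - 1 = s) := fun e => hcl ((hA _ (by omega)).2 e)
    have key : ∃ a1 a2, a1 < a2 ∧ 2 ≤ a1 ∧ a2 + 2 ≤ n ∧ (a1 = p ∨ a1 = q ∨ a1 = s) ∧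
        (a2 = p ∨ a2 = q ∨ a2 = s) := by
      have := Nat.lt_or_gt_of_ne hpq
      have := Nat.lt_or_gt_of_ne hps
      have := Nat.lt_or_gt_of_ne hqs
      by_cases c1 : p = 1
      · rcases Nat.lt_or_gt_of_ne hqs with e | e
        · exact ⟨q, s, by omega⟩
        · exact ⟨s, q, by omega⟩
      · by_cases c2 : q = 1
        · rcases Nat.lt_or_gt_of_ne hps with e | e
          · exact ⟨p, s, by omega⟩
          · exact ⟨s, p, by omega⟩
        · rcases Nat.lt_or_gt_of_ne hpq with e | e
          · exact ⟨p, q, by omega⟩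
          · exact ⟨q, p, by omega⟩
    obtain ⟨a1, a2, k1, k2, k3, k4, k5⟩ := key
    exact ⟨a1, a2, k1, k2, k3, (hA _ (by omega)).2 k4, (hA _ (by omega)).2 k5⟩
  obtain ⟨b, b1, b2, B⟩ : ∃ b, 1 ≤ b ∧ b + 3 ≤ n ∧ G.Adj (v (n - 1)) (v b) := by
    obtain ⟨p, q, s, hp, hq, hs, hpq, hps, hqs, hA⟩ := h.nbrs hcubic (n - 1)
    have e0 : ¬ (n - 1 = p ∨ n - 1 = q ∨ n - 1 = s) := fun e =>
      G.loopless.irrefl _ ((hA (n - 1) (by omega)).2 e)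
    have el : ¬ (0 = p ∨ 0 = q ∨ 0 = s) := fun e => hcl ((hA _ (by omega)).2 e).symm
    by_cases c1 : p + 2 = n
    · exact ⟨q, by omega, by omega, (hA _ (by omega)).2 (by omega)⟩
    · exact ⟨p, by omega, by omega, (hA _ (by omega)).2 (by omega)⟩
  rcases Nat.lt_trichotomy b a2 with e | e | e
  · exact theta_good hcubic h hn b1 e h2 A2 B
  · subst e
    exfalso
    obtain ⟨p, q, s, hp, hq, hs, hpq, hps, hqs, hA⟩ := h.nbrs hcubic b
    have e1 := (hA 0 (by omega)).1 A2.symm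
    have e2 := (hA (n - 1) (by omega)).1 B.symm
    have e3 := (hA (b + 1) (by omega)).1 (h.step b (by omega))
    have e4 := (hA (b - 1) (by omega)).1 (by
      have := h.step (b - 1) (by omega)
      rw [show b - 1 + 1 = b by omega] at this
      exact this.symm)
    omega
  · obtain ⟨μ, hμ⟩ := hp_exists hcubic h hn (a := a2) (b := b) (by omega) b2 (by omega) A2 B
    have e0 : μ 0 = a1 := by
      rcases (hμ.adj 0 a1 (by omega) (by omega)).1 A1 with hh | hh
      · unfold H at hh; omega
      · exact hh.1
    exact dumbbell_good hcubic hμ e (by omega) (by omega)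

lemma trace_good (hcubic : ∀ v : V, G.degree v = 3)
    {x y : V} (p : G.Walk x y) (hp : p.IsPath) (hh : p.IsHamiltonian) : Good G := by
  have hlen := hh.length_eq
  have hc : 3 < Fintype.card V := by
    rw [← hcubic x]
    exact G.degree_lt_card_verts x
  refine ham_good (n := Fintype.card V) (v := p.getVert) hcubic ⟨?_, ?_, ?_⟩ hc
  · intro i j hi hj e
    exact hp.getVert_injOn (by simp; omega) (by simp; omega) e
  · intro z
    obtain ⟨i, hi, hi'⟩ := SimpleGraph.Walk.mem_support_iff_exists_getVert.1 (hh.mem_support z)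
    exact ⟨i, by omega, hi⟩
  · intro i hi
    exact p.adj_getVert_succ (by omega)

end

end HO

/-- Hoffmann-Ostenhof's conjecture holds for traceable cubic graphs:
if `G` is a connected cubic graph containing a Hamiltonian path, then the edge
set of `G` can be partitioned into the edge set of a spanning tree of `G`,
the edge set of a matching, and the edge set of a disjoint union of cycles. -/
theorem hoffmann_ostenhof_traceable
    {V : Type*} [Fintype V] [DecidableEq V] (G : SimpleGraph V) [DecidableRel G.Adj]
    (hcubic : ∀ v : V, G.degree v = 3)
    (hconn : G.Connected)
    (htrace : ∃ (u v : V) (p : G.Walk u v), p.IsPath ∧ p.IsHamiltonian) :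
    ∃ (T M C : Set (Sym2 V)),
      -- the three parts partition the edge set of `G`
      T ∪ M ∪ C = G.edgeSet ∧
      Disjoint T M ∧ Disjoint T C ∧ Disjoint M C ∧
      -- `T` is the edge set of a spanning tree of `G`
      (SimpleGraph.fromEdgeSet T).IsTree ∧
      -- `M` is a matching: distinct edges of `M` share no vertex
      M.Pairwise (fun e f => ∀ v : V, v ∈ e → v ∉ f) ∧
      -- `C` is the edge set of a family of vertex-disjoint cycles of `G`
      (∃ (ι : Type) (_ : Fintype ι) (x : ι → V)
          (w : ∀ i : ι, G.Walk (x i) (x i)),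
        (∀ i, (w i).IsCycle) ∧
        (Pairwise fun i j => ∀ v : V, v ∈ (w i).support → v ∉ (w j).support) ∧
        C = ⋃ i, {e : Sym2 V | e ∈ (w i).edges}) := by
  obtain ⟨x, y, p, hp, hh⟩ := htrace
  exact HO.Good.main G hcubic (HO.trace_good hcubic p hp hh)
end
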